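/- arXiv:2010.11100 — 2 statements merged into one kernel-verified Lean document; each statement's English description precedes it below -/
import Mathlib

section
/- For every integer n ≥ 3, the maximum number of triples in an M_1-free convex geometric 3-uniform hypergraph on Ω_n equals ∇(n) + n(n−3)/2; that is, ex_circ(n, M_1) = ∇(n) + n(n−3)/2. -/
/-- The list of points of `ZMod n` occurs in this clockwise cyclic order:
anchored at the first point, the clockwise arc-distances from it are
positive and strictly increasing. -/
def CWList (n : ℕ) : List (ZMod n) → Prop
  | [] => True
  | a :: l => ((0 : ℕ) :: l.map fun b => (b - a).val).Chain' (· < ·)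

/-- `H` is a 3-uniform (convex geometric) hypergraph on `Ω_n = ZMod n`. -/
def IsCgh (n : ℕ) (H : Finset (Finset (ZMod n))) : Prop :=
  ∀ e ∈ H, e.card = 3

def nabla (n : ℕ) : ℕ :=
  if Odd n then n * (n - 1) * (n + 1) / 24 else n * (n - 2) * (n + 2) / 24

/-- `H` contains a copy of the configuration `M₁`: two triples whose six
vertices occur in clockwise cyclic order `a₁, a₂, a₃, b₁, b₂, b₃`. -/
def HasM1 (n : ℕ) (H : Finset (Finset (ZMod n))) : Prop :=
  ∃ a₁ a₂ a₃ b₁ b₂ b₃ : ZMod n,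
    CWList n [a₁, a₂, a₃, b₁, b₂, b₃] ∧
    ({a₁, a₂, a₃} : Finset (ZMod n)) ∈ H ∧ ({b₁, b₂, b₃} : Finset (ZMod n)) ∈ H

/-!
A triple spans three arcs, each running from one of its vertices to another through the third; an
arc with `m` vertices is spanned by `m - 2` triples. If `H` is `M₁`-free, then at least one of any
two complementary arcs contains no triple of `H`; in particular no triple of `H` spans it. Select
such an arc from each complementary pair, preferring the shorter one. Two selected arcs `A ≠ B`
spanned by the same triple would cover the circle with overlap, so one of them, say `A`, would be
longer than half of the circle. It was selected because `Aᶜ` contains a triple of `H`, but `Aᶜ ⊆ B`.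
Hence distinct selected arcs are spanned by distinct triples, and the number of triples missing from
`H` is at least half the sum of `min (|A|, |Aᶜ|) - 2` over all arcs. Omitting exactly the triples
that span the shorter arc of some complementary pair gives equality, because the two triples of a
copy of `M₁` span disjoint arcs.
-/

lemma sum_range_min_sub (n c : ℕ) :
    ∑ k ∈ Finset.range (n + 1), (min k (n - k) - c) = (n - 2 * c) ^ 2 / 4 := by
  induction n using Nat.twoStepInduction generalizing c with
  | zero => simp
  | one =>
    have hlt : (1 - 2 * c) ^ 2 < 4 := by
      rcases c with _ | c
      · decide
      · simp [show 1 - 2 * (c + 1) = 0 by omega]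
    simp [Finset.sum_range_succ, Nat.div_eq_of_lt hlt]
  | more n ih _ =>
    have hpeel : ∑ k ∈ Finset.range (n + 2 + 1), (min k (n + 2 - k) - c) =
        ∑ k ∈ Finset.range (n + 1), (min k (n - k) + 1 - c) := by
      have hterm : ∀ k ∈ Finset.range (n + 1),
          min (k + 1) (n + 2 - (k + 1)) - c = min k (n - k) + 1 - c := fun k hk => by
        have := Finset.mem_range.1 hk
        omega
      rw [Finset.sum_range_succ, Finset.sum_range_succ', Finset.sum_congr rfl hterm]
      simp
    rw [hpeel]
    rcases c with _ | c
    · have h := ih 0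
      simp only [Nat.sub_zero, mul_zero] at h ⊢
      rw [Finset.sum_add_distrib, h, Finset.sum_const, Finset.card_range, smul_eq_mul, mul_one,
        show (n + 2) ^ 2 = n ^ 2 + (n + 1) * 4 by ring, Nat.add_mul_div_right _ _ four_pos]
    · simpa only [Nat.add_sub_add_right, mul_add, mul_one] using ih c

lemma two_mul_sum_filter_of_involutive {α : Type*} [Fintype α] {σ : α → α}
    (hσ : Function.Involutive σ) (P : α → Prop) [DecidablePred P] (f : α → ℕ) :
    2 * ∑ a with P a, f a =
      ∑ a, ((if P a then f a else 0) + if P (σ a) then f (σ a) else 0) := by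
  rw [Finset.sum_add_distrib, hσ.bijective.sum_comp fun a => if P a then f a else 0,
    ← Finset.sum_filter, two_mul]

lemma twentyFour_mul_nabla_of_odd {n : ℕ} (hn : Odd n) :
    24 * nabla n = n * (n - 1) * (n + 1) := by
  obtain ⟨k, rfl⟩ := hn
  have hdvd : 6 ∣ k * (k + 1) * (2 * k + 1) := by
    have hmod : ∀ x : ZMod 6, x * (x + 1) * (2 * x + 1) = 0 := by decide
    exact (ZMod.natCast_eq_zero_iff _ 6).1 (by exact_mod_cast hmod k)
  have hfactor : (2 * k + 1) * (2 * k + 1 - 1) * (2 * k + 1 + 1) =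
      4 * (k * (k + 1) * (2 * k + 1)) := by
    rw [Nat.add_sub_cancel]
    ring
  rw [nabla, if_pos (odd_two_mul_add_one k),
    Nat.mul_div_cancel' (hfactor ▸ mul_dvd_mul_left 4 hdvd)]

lemma twentyFour_mul_nabla_of_even {n : ℕ} (hn : Even n) :
    24 * nabla n = n * (n - 2) * (n + 2) := by
  obtain ⟨k, rfl⟩ := even_iff_exists_two_mul.1 hn
  have hdvd : 3 ∣ k * (k - 1) * (k + 1) := by
    rcases k with _ | k
    · simp
    have hmod : ∀ x : ZMod 3, (x + 1) * x * (x + 1 + 1) = 0 := by decide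
    exact (ZMod.natCast_eq_zero_iff _ 3).1 (by exact_mod_cast hmod k)
  have hfactor : 2 * k * (2 * k - 2) * (2 * k + 2) = 8 * (k * (k - 1) * (k + 1)) := by
    rw [show 2 * k - 2 = 2 * (k - 1) by omega]
    ring
  rw [nabla, if_neg (Nat.not_odd_iff_even.2 hn),
    Nat.mul_div_cancel' (hfactor ▸ mul_dvd_mul_left 8 hdvd)]

lemma six_mul_choose_three (n : ℕ) : 6 * n.choose 3 = n * (n - 1) * (n - 2) := by
  have h := n.descFactorial_eq_factorial_mul_choose 3
  simp only [Nat.descFactorial, Nat.factorial] at h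
  linear_combination -h

lemma two_mul_nabla_add_eq_two_mul_choose {n : ℕ} (hn : 3 ≤ n) :
    2 * (nabla n + n * (n - 3) / 2) + n * ((n - 4) ^ 2 / 4) = 2 * n.choose 3 := by
  obtain rfl | hn4 := hn.eq_or_lt
  · decide
  obtain ⟨N, rfl⟩ := Nat.exists_eq_add_of_le' hn4
  have hchoose := six_mul_choose_three (N + 4)
  obtain ⟨t, rfl | rfl⟩ := N.even_or_odd'
  · have hnabla := twentyFour_mul_nabla_of_even (n := 2 * t + 4) ⟨t + 2, by ring⟩
    have hdiag : (2 * t + 4) * (2 * t + 4 - 3) / 2 = (t + 2) * (2 * t + 1) :=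
      Nat.div_eq_of_eq_mul_left two_pos (by simp; ring)
    have hsq : (2 * t + 4 - 4) ^ 2 / 4 = t ^ 2 :=
      Nat.div_eq_of_eq_mul_left four_pos (by simp; ring)
    rw [hdiag, hsq]
    simp only [Nat.reduceSubDiff] at hnabla hchoose
    linarith
  · have hnabla := twentyFour_mul_nabla_of_odd (n := 2 * t + 1 + 4) ⟨t + 2, by ring⟩
    have hdiag : (2 * t + 1 + 4) * (2 * t + 1 + 4 - 3) / 2 = (2 * t + 5) * (t + 1) :=
      Nat.div_eq_of_eq_mul_left two_pos (by simp; ring)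
    have hsq : (2 * t + 1 + 4 - 4) ^ 2 / 4 = t ^ 2 + t := by
      rw [Nat.add_sub_cancel, show (2 * t + 1) ^ 2 = 1 + (t ^ 2 + t) * 4 by ring,
        Nat.add_mul_div_right _ _ four_pos]
      simp
    rw [hdiag, hsq]
    simp only [Nat.reduceSubDiff] at hnabla hchoose
    linarith

section Offsets

variable {n : ℕ}

lemma val_add_natCast_sub (s : ZMod n) {p : ℕ} (hp : p < n) : (s + p - s).val = p := by
  rw [add_sub_cancel_left, ZMod.val_natCast_of_lt hp]

lemma add_natCast_inj (s : ZMod n) {p q : ℕ} (hp : p < n) (hq : q < n) :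
    s + p = s + q ↔ p = q := by
  rw [add_right_inj, ZMod.natCast_eq_natCast_iff', Nat.mod_eq_of_lt hp, Nat.mod_eq_of_lt hq]

lemma add_natCast_eq_self (s : ZMod n) {p : ℕ} (hp : p < n) : s + p = s ↔ p = 0 := by
  simpa using add_natCast_inj s hp (Nat.zero_lt_of_lt hp)

variable [NeZero n]

lemma val_sub_injective (s : ZMod n) : Function.Injective fun x : ZMod n => (x - s).val :=
  (ZMod.val_injective n).comp sub_left_injective

lemma add_natCast_val_sub (s x : ZMod n) : s + ((x - s).val : ZMod n) = x := by
  rw [ZMod.natCast_zmod_val, add_sub_cancel]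

lemma val_sub_add_val_sub_of_le {s a b : ZMod n} (h : (b - s).val ≤ (a - s).val) :
    (a - b).val + (b - s).val = (a - s).val := by
  rw [← sub_sub_sub_cancel_right a b s, ZMod.val_sub h, Nat.sub_add_cancel h]

lemma val_sub_add_val_sub_of_lt {s a b : ZMod n} (h : (a - s).val < (b - s).val) :
    (a - b).val + (b - s).val = (a - s).val + n := by
  rw [← sub_add_sub_cancel a b s] at h ⊢
  refine ZMod.val_add_val_of_le (not_lt.1 fun hlt => ?_)
  rw [ZMod.val_add_of_lt hlt] at h
  omega

end Offsets

lemma exists_eq_triple_lt_of_card_eq_three {α β : Type*} [DecidableEq α] [LinearOrder β] {f : α → β}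
    (hf : Function.Injective f) {T : Finset α} (hT : T.card = 3) :
    ∃ a b c, T = {a, b, c} ∧ f a < f b ∧ f b < f c := by
  let := LinearOrder.lift' f hf
  let e := T.orderEmbOfFin hT
  refine ⟨e 0, e 1, e 2, ?_, e.strictMono (by decide), e.strictMono (by decide)⟩
  ext x
  have hmem : x ∈ T ↔ ∃ i, e i = x := by
    rw [← Finset.mem_coe, ← T.range_orderEmbOfFin hT, Set.mem_range]
  simp [hmem, Fin.exists_fin_succ, eq_comm]

lemma cwList_six_iff {n : ℕ} {a₁ a₂ a₃ b₁ b₂ b₃ : ZMod n} :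
    CWList n [a₁, a₂, a₃, b₁, b₂, b₃] ↔
      0 < (a₂ - a₁).val ∧ (a₂ - a₁).val < (a₃ - a₁).val ∧ (a₃ - a₁).val < (b₁ - a₁).val ∧
      (b₁ - a₁).val < (b₂ - a₁).val ∧ (b₂ - a₁).val < (b₃ - a₁).val := by
  simp [CWList, List.Chain']

/-- The arc of `length` consecutive vertices of `Ω_n`, listed clockwise from `start`. The full
circle and the empty arc occur once for each starting vertex. -/
@[ext]
structure Arc (n : ℕ) where
  start : ZMod n
  length : Fin (n + 1)

namespace Arc

variable {n : ℕ}

/-- An arc is determined by its start and its length; this makes the type of arcs finite. -/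
def equivProd (n : ℕ) : Arc n ≃ ZMod n × Fin (n + 1) where
  toFun a := (a.start, a.length)
  invFun p := ⟨p.1, p.2⟩

instance [NeZero n] : Fintype (Arc n) := Fintype.ofEquiv _ (equivProd n).symm

/-- The complementary arc, which starts right after the last vertex of `a`. -/
instance : Compl (Arc n) := ⟨fun a => ⟨a.start + (a.length : ℕ), a.length.rev⟩⟩

lemma start_compl (a : Arc n) : aᶜ.start = a.start + (a.length : ℕ) := rfl

lemma length_compl (a : Arc n) : (aᶜ.length : ℕ) = n - a.length := by
  simp [Compl.compl, Fin.val_rev]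

lemma length_le (a : Arc n) : (a.length : ℕ) ≤ n := Fin.is_le _

lemma compl_involutive : Function.Involutive (compl : Arc n → Arc n) := fun a => by
  ext
  · simp [start_compl, length_compl, Nat.cast_sub a.length_le]
  · have := a.length_le
    simp only [length_compl]
    omega

/-- The triples spanning `a`: those contained in `a` and containing both of its end vertices. -/
def spanned (a : Arc n) : Finset (Finset (ZMod n)) :=
  (Finset.Ioo 0 ((a.length : ℕ) - 1)).image fun p : ℕ =>
    {a.start, a.start + p, a.start + ((a.length : ℕ) - 1 : ℕ)}

lemma mem_spanned {a : Arc n} {T : Finset (ZMod n)} :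
    T ∈ a.spanned ↔ ∃ p : ℕ, (0 < p ∧ p < (a.length : ℕ) - 1) ∧
      {a.start, a.start + p, a.start + ((a.length : ℕ) - 1 : ℕ)} = T := by
  simp [spanned]

lemma card_spanned (a : Arc n) : a.spanned.card = a.length - 2 := by
  have hlen := a.length_le
  rw [spanned, Finset.card_image_of_injOn, Nat.card_Ioo]
  · omega
  intro p hp q hq (hpq : {_, _, _} = {_, _, _})
  obtain ⟨hp₀, hp₁⟩ := Finset.mem_Ioo.1 hp
  have hq₁ := (Finset.mem_Ioo.1 hq).2
  have hmem : a.start + (p : ZMod n) ∈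
      ({a.start, a.start + q, a.start + ((a.length : ℕ) - 1 : ℕ)} : Finset (ZMod n)) := by
    simp [← hpq]
  rw [Finset.mem_insert, Finset.mem_insert, Finset.mem_singleton,
    add_natCast_eq_self _ (by omega), add_natCast_inj _ (by omega) (by omega),
    add_natCast_inj _ (by omega) (by omega)] at hmem
  omega

lemma card_of_mem_spanned {a : Arc n} {T : Finset (ZMod n)} (hT : T ∈ a.spanned) :
    T.card = 3 := by
  obtain ⟨p, ⟨hp₀, hp₁⟩, rfl⟩ := mem_spanned.1 hT
  have hlen := a.length_le
  refine Finset.card_eq_three.2 ⟨_, _, _, ?_, ?_, ?_, rfl⟩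
  · rw [ne_comm, Ne, add_natCast_eq_self _ (by omega)]
    omega
  · rw [ne_comm, Ne, add_natCast_eq_self _ (by omega)]
    omega
  · rw [Ne, add_natCast_inj _ (by omega) (by omega)]
    omega

lemma start_mem_of_mem_spanned {a : Arc n} {T : Finset (ZMod n)} (hT : T ∈ a.spanned) :
    a.start ∈ T := by
  obtain ⟨p, -, rfl⟩ := mem_spanned.1 hT
  exact Finset.mem_insert_self _ _

variable [NeZero n]

lemma sum_min_length_sub (c : ℕ) :
    ∑ a : Arc n, (min (a.length : ℕ) aᶜ.length - c) = n * ((n - 2 * c) ^ 2 / 4) := by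
  simp only [length_compl]
  rw [← (equivProd n).symm.sum_comp, Fintype.sum_prod_type, ← sum_range_min_sub,
    ← Fin.sum_univ_eq_sum_range fun k => min k (n - k) - c]
  simp [equivProd, ZMod.card]

lemma sum_min_le_two_mul_sum_filter {P : Arc n → Prop} [DecidablePred P]
    (hP : ∀ a, P a ∨ P aᶜ) {f : ℕ → ℕ} (hf : Monotone f) :
    ∑ a : Arc n, f (min a.length aᶜ.length) ≤ 2 * ∑ a : Arc n with P a, f a.length := by
  rw [two_mul_sum_filter_of_involutive compl_involutive]
  refine Finset.sum_le_sum fun a _ => ?_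
  obtain h | h := hP a
  · rw [if_pos h]
    exact (hf (min_le_left _ _)).trans (Nat.le_add_right _ _)
  · rw [if_pos h]
    exact (hf (min_le_right _ _)).trans (Nat.le_add_left _ _)

lemma two_mul_sum_filter_le_sum_min {P : Arc n → Prop} [DecidablePred P]
    (hP : ∀ a, P a → ¬ P aᶜ) (hle : ∀ a, P a → (a.length : ℕ) ≤ aᶜ.length) (f : ℕ → ℕ) :
    2 * ∑ a : Arc n with P a, f a.length ≤ ∑ a : Arc n, f (min a.length aᶜ.length) := by
  rw [two_mul_sum_filter_of_involutive compl_involutive]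
  refine Finset.sum_le_sum fun a _ => ?_
  by_cases h : P a
  · rw [if_pos h, if_neg (hP a h), min_eq_left (hle a h), add_zero]
  · rw [if_neg h, zero_add]
    split_ifs with hc
    · have hmin : (aᶜ.length : ℕ) ≤ a.length := by
        simpa only [compl_involutive a] using hle aᶜ hc
      rw [min_eq_right hmin]
    · exact Nat.zero_le _

/-- The vertices lying on an arc. -/
def points (a : Arc n) : Finset (ZMod n) := {x | (x - a.start).val < a.length}

lemma mem_points {a : Arc n} {x : ZMod n} : x ∈ a.points ↔ (x - a.start).val < a.length := by
  simp [points]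

lemma mem_points_compl {a : Arc n} {x : ZMod n} : x ∈ aᶜ.points ↔ x ∉ a.points := by
  simp only [mem_points, start_compl, length_compl, not_lt]
  obtain hlt | heq := a.length_le.lt_or_eq
  · have hoff := val_add_natCast_sub a.start hlt
    have hx := ZMod.val_lt (x - a.start)
    obtain h | h := lt_or_ge (x - a.start).val a.length
    · have := val_sub_add_val_sub_of_lt (hoff.symm ▸ h)
      omega
    · have := val_sub_add_val_sub_of_le (hoff.symm ▸ h)
      omega
  · have := ZMod.val_lt (x - a.start)
    omega

lemma compl_subset_of_mem_of_mem {a b : Arc n} (hne : a.start ≠ b.start)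
    (hb : b.start ∈ a.points) (ha : a.start ∈ b.points) :
    aᶜ.points ⊆ b.points ∧ n < a.length + b.length := by
  rw [mem_points] at ha hb
  have hpos : 0 < (b.start - a.start).val := by
    rw [ZMod.val_pos, sub_ne_zero]
    exact hne.symm
  have hwrap := val_sub_add_val_sub_of_lt (s := a.start) (a := a.start) (b := b.start)
    (by rwa [sub_self, ZMod.val_zero])
  simp only [sub_self, ZMod.val_zero, zero_add] at hwrap
  refine ⟨fun x hx => ?_, by omega⟩
  rw [mem_points_compl, mem_points, not_lt] at hx
  have := val_sub_add_val_sub_of_le (hb.le.trans hx)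
  have := ZMod.val_lt (x - a.start)
  rw [mem_points]
  omega

lemma subset_points_of_mem_spanned {a : Arc n} {T : Finset (ZMod n)} (hT : T ∈ a.spanned) :
    T ⊆ a.points := by
  obtain ⟨p, ⟨hp₀, hp₁⟩, rfl⟩ := mem_spanned.1 hT
  have hlen := a.length_le
  simp only [Finset.insert_subset_iff, Finset.singleton_subset_iff, mem_points, sub_self,
    ZMod.val_zero]
  rw [val_add_natCast_sub _ (by omega), val_add_natCast_sub _ (by omega)]
  omega

lemma length_le_of_mem_spanned_of_subset {a b : Arc n} {T : Finset (ZMod n)}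
    (hstart : a.start = b.start) (ha : T ∈ a.spanned) (hb : T ⊆ b.points) :
    a.length ≤ b.length := by
  obtain ⟨p, -, rfl⟩ := mem_spanned.1 ha
  have hlen := a.length_le
  have hlast : a.start + ((a.length : ℕ) - 1 : ℕ) ∈ b.points := hb (by simp)
  rw [mem_points, ← hstart, val_add_natCast_sub _ (by omega)] at hlast
  rw [Fin.le_def]
  omega

lemma compl_subset_of_mem_spanned {a b : Arc n} {T : Finset (ZMod n)} (hne : a ≠ b)
    (ha : T ∈ a.spanned) (hb : T ∈ b.spanned) :
    aᶜ.points ⊆ b.points ∧ n < a.length + b.length := by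
  have haT := subset_points_of_mem_spanned ha
  have hbT := subset_points_of_mem_spanned hb
  refine compl_subset_of_mem_of_mem (fun hstart => hne ?_)
    (haT (start_mem_of_mem_spanned hb)) (hbT (start_mem_of_mem_spanned ha))
  exact Arc.ext hstart <| le_antisymm (length_le_of_mem_spanned_of_subset hstart ha hbT)
    (length_le_of_mem_spanned_of_subset hstart.symm hb haT)

/-- The arc that runs clockwise from `u` to `v`, both included. -/
def fromTo (u v : ZMod n) : Arc n :=
  ⟨u, ⟨(v - u).val + 1, Nat.succ_lt_succ (ZMod.val_lt _)⟩⟩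

lemma triple_mem_spanned_fromTo {u v w : ZMod n} (huv : 0 < (v - u).val)
    (hvw : (v - u).val < (w - u).val) : {u, v, w} ∈ (fromTo u w).spanned :=
  mem_spanned.2 ⟨(v - u).val, ⟨huv, by simpa [fromTo] using hvw⟩, by simp [fromTo]⟩

end Arc

section UpperBound

variable {n : ℕ} [NeZero n] {H : Finset (Finset (ZMod n))} {a b : Arc n}

lemma hasM1_of_subset_points_compl (hH : IsCgh n H) {T T' : Finset (ZMod n)}
    (hT : T ∈ H) (hT' : T' ∈ H) (ha : T ⊆ a.points) (ha' : T' ⊆ aᶜ.points) : HasM1 n H := by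
  obtain ⟨x, y, z, rfl, hxy, hyz⟩ :=
    exists_eq_triple_lt_of_card_eq_three (val_sub_injective a.start) (hH _ hT)
  obtain ⟨x', y', z', rfl, hxy', hyz'⟩ :=
    exists_eq_triple_lt_of_card_eq_three (val_sub_injective a.start) (hH _ hT')
  have hz : (z - a.start).val < a.length := Arc.mem_points.1 (ha (by simp))
  have hx' : ¬ (x' - a.start).val < a.length := by
    rw [← Arc.mem_points, ← Arc.mem_points_compl]
    exact ha' (by simp)
  have hoff {v : ZMod n} (hv : (x - a.start).val < (v - a.start).val) :
      (v - x).val + (x - a.start).val = (v - a.start).val := val_sub_add_val_sub_of_le hv.le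
  refine ⟨x, y, z, x', y', z', cwList_six_iff.2 ?_, hT, hT'⟩
  have := hoff (v := y) (by omega)
  have := hoff (v := z) (by omega)
  have := hoff (v := x') (by omega)
  have := hoff (v := y') (by omega)
  have := hoff (v := z') (by omega)
  omega

namespace Arc

/-- No triple of `H` lies within the arc `a`. -/
def Avoids (a : Arc n) (H : Finset (Finset (ZMod n))) : Prop := ∀ T ∈ H, ¬ T ⊆ a.points

/-- The arcs whose spanned triples witness that `H` is small: those that avoid `H`, except that an
arc longer than half of the circle is only taken when its complement does not avoid `H`. -/
def Selected (a : Arc n) (H : Finset (Finset (ZMod n))) : Prop :=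
  a.Avoids H ∧ (2 * (a.length : ℕ) ≤ n ∨ ¬ aᶜ.Avoids H)

lemma avoids_or_avoids_compl (hH : IsCgh n H) (hM : ¬ HasM1 n H) (a : Arc n) :
    a.Avoids H ∨ aᶜ.Avoids H := by
  by_contra! h
  simp only [Avoids, not_forall, not_not] at h
  obtain ⟨⟨T, hT, hTa⟩, T', hT', hTa'⟩ := h
  exact hM (hasM1_of_subset_points_compl hH hT hT' hTa hTa')

lemma selected_or_selected_compl (hH : IsCgh n H) (hM : ¬ HasM1 n H) (a : Arc n) :
    a.Selected H ∨ aᶜ.Selected H := by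
  have havoid := avoids_or_avoids_compl hH hM a
  have hlen : 2 * (a.length : ℕ) ≤ n ∨ 2 * (aᶜ.length : ℕ) ≤ n := by
    rw [length_compl]
    omega
  simp only [Selected, compl_involutive a]
  tauto

lemma Selected.two_mul_length_le (ha : a.Selected H) (hb : b.Avoids H)
    (hab : aᶜ.points ⊆ b.points) : 2 * (a.length : ℕ) ≤ n :=
  ha.2.resolve_right fun h => h fun T hT hTa => hb T hT (hTa.trans hab)

lemma Selected.disjoint_spanned (ha : a.Selected H) (hb : b.Selected H) (hne : a ≠ b) :
    Disjoint a.spanned b.spanned := by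
  refine Finset.disjoint_left.2 fun T hTa hTb => ?_
  obtain ⟨hab, hlen⟩ := compl_subset_of_mem_spanned hne hTa hTb
  obtain ⟨hba, -⟩ := compl_subset_of_mem_spanned hne.symm hTb hTa
  have := ha.two_mul_length_le hb.1 hab
  have := hb.two_mul_length_le ha.1 hba
  omega

end Arc

lemma two_mul_card_add_sum_le (hH : IsCgh n H) (hM : ¬ HasM1 n H) :
    2 * H.card + ∑ a : Arc n, (min (a.length : ℕ) aᶜ.length - 2) ≤ 2 * n.choose 3 := by
  classical
  let U := Finset.biUnion {a : Arc n | a.Selected H} Arc.spanned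
  have hUcard : U.card = ∑ a : Arc n with a.Selected H, ((a.length : ℕ) - 2) := by
    simp only [← Arc.card_spanned]
    refine Finset.card_biUnion fun a ha b hb hne => ?_
    exact (Finset.mem_filter.1 ha).2.disjoint_spanned (Finset.mem_filter.1 hb).2 hne
  have hdisj : Disjoint H U := by
    simp only [U, Finset.disjoint_biUnion_right, Finset.mem_filter_univ]
    exact fun a ha => Finset.disjoint_left.2 fun T hT hTa =>
      ha.1 T hT (Arc.subset_points_of_mem_spanned hTa)
  have hsub : H ∪ U ⊆ Finset.powersetCard 3 Finset.univ := by
    refine Finset.union_subset (fun T hT => by simpa using hH T hT) ?_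
    exact Finset.biUnion_subset.2 fun a _ T hT => by simpa using Arc.card_of_mem_spanned hT
  have htotal : H.card + U.card ≤ n.choose 3 := by
    rw [← Finset.card_union_of_disjoint hdisj]
    simpa [ZMod.card] using Finset.card_le_card hsub
  have hsum := Arc.sum_min_le_two_mul_sum_filter (Arc.selected_or_selected_compl hH hM)
    fun _ _ h => Nat.sub_le_sub_right h 2
  omega

end UpperBound

section Extremal

variable {n : ℕ}

/-- One arc out of each complementary pair: the shorter one, and for two arcs of length `n / 2`
the one whose start is labelled by `0, …, n / 2 - 1`. -/
def Arc.IsShort (a : Arc n) : Prop :=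
  2 * (a.length : ℕ) < n ∨ 2 * (a.length : ℕ) = n ∧ a.start.val < a.length

instance : DecidablePred (Arc.IsShort : Arc n → Prop) := fun _ =>
  inferInstanceAs (Decidable (_ ∨ _))

lemma Arc.IsShort.length_le_length_compl {a : Arc n} (ha : a.IsShort) :
    (a.length : ℕ) ≤ aᶜ.length := by
  have hle : 2 * (a.length : ℕ) ≤ n := ha.elim le_of_lt fun h => h.1.le
  rw [length_compl]
  omega

variable [NeZero n]

lemma Arc.isShort_compl_iff {a : Arc n} : aᶜ.IsShort ↔ ¬ a.IsShort := by
  simp only [IsShort, length_compl, start_compl]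
  have hlen := a.length_le
  obtain hhalf | hhalf := eq_or_ne (2 * (a.length : ℕ)) n
  · have hval : ((a.length : ℕ) : ZMod n).val = a.length :=
      ZMod.val_natCast_of_lt (by have := NeZero.pos n; omega)
    have hstart := ZMod.val_lt a.start
    obtain h | h := lt_or_ge (a.start.val + ((a.length : ℕ) : ZMod n).val) n
    · have := ZMod.val_add_of_lt h
      omega
    · have := ZMod.val_add_val_of_le h
      omega
  · omega

/-- All triples except those that span a short arc. -/
def extremalCgh (n : ℕ) [NeZero n] : Finset (Finset (ZMod n)) :=
  Finset.powersetCard 3 Finset.univ \ Finset.biUnion {a : Arc n | a.IsShort} Arc.spanned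

lemma isCgh_extremalCgh : IsCgh n (extremalCgh n) := fun _ hT =>
  (Finset.mem_powersetCard.1 (Finset.mem_sdiff.1 hT).1).2

lemma not_isShort_of_mem_extremalCgh {a : Arc n} {T : Finset (ZMod n)}
    (hT : T ∈ extremalCgh n) (ha : T ∈ a.spanned) : ¬ a.IsShort := fun hshort =>
  (Finset.mem_sdiff.1 hT).2 (Finset.mem_biUnion.2 ⟨a, by simpa using hshort, ha⟩)

lemma not_hasM1_extremalCgh : ¬ HasM1 n (extremalCgh n) := by
  rintro ⟨a₁, a₂, a₃, b₁, b₂, b₃, hcw, ha, hb⟩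
  obtain ⟨h₁, h₂, h₃, h₄, h₅⟩ := cwList_six_iff.1 hcw
  have hb₂ := val_sub_add_val_sub_of_le h₄.le
  have hb₃ := val_sub_add_val_sub_of_le (h₄.trans h₅).le
  have hlt := ZMod.val_lt (b₃ - a₁)
  have hA := not_isShort_of_mem_extremalCgh ha (Arc.triple_mem_spanned_fromTo h₁ h₂)
  have hB := not_isShort_of_mem_extremalCgh hb
    (Arc.triple_mem_spanned_fromTo (u := b₁) (v := b₂) (w := b₃) (by omega) (by omega))
  have hcompl : (Arc.fromTo a₁ a₃)ᶜ = Arc.fromTo b₁ b₃ := by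
    have hA' : n ≤ 2 * ((a₃ - a₁).val + 1) := not_lt.1 fun h => hA (Or.inl h)
    have hB' : n ≤ 2 * ((b₃ - b₁).val + 1) := not_lt.1 fun h => hB (Or.inl h)
    ext
    · change a₁ + (((a₃ - a₁).val + 1 : ℕ) : ZMod n) = b₁
      rw [show (a₃ - a₁).val + 1 = (b₁ - a₁).val by omega, add_natCast_val_sub]
    · rw [Arc.length_compl]
      change n - ((a₃ - a₁).val + 1) = (b₃ - b₁).val + 1
      omega
  exact hB (hcompl ▸ Arc.isShort_compl_iff.2 hA)

lemma two_mul_choose_le_card_extremalCgh :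
    2 * n.choose 3 ≤
      2 * (extremalCgh n).card + ∑ a : Arc n, (min (a.length : ℕ) aᶜ.length - 2) := by
  have hexcluded : (Finset.biUnion {a : Arc n | a.IsShort} Arc.spanned).card ≤
      ∑ a : Arc n with a.IsShort, ((a.length : ℕ) - 2) :=
    Finset.card_biUnion_le.trans (Finset.sum_le_sum fun a _ => a.card_spanned.le)
  have hsdiff := Finset.le_card_sdiff (Finset.biUnion {a : Arc n | a.IsShort} Arc.spanned)
    (Finset.powersetCard 3 Finset.univ)
  rw [Finset.card_powersetCard, Finset.card_univ, ZMod.card] at hsdiff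
  have hsum := Arc.two_mul_sum_filter_le_sum_min (n := n)
    (fun _ h hc => Arc.isShort_compl_iff.1 hc h)
    (fun _ => Arc.IsShort.length_le_length_compl) (· - 2)
  rw [extremalCgh]
  omega

end Extremal

theorem ex_M1 (n : ℕ) (hn : 3 ≤ n) :
    IsGreatest {m : ℕ | ∃ H : Finset (Finset (ZMod n)),
        IsCgh n H ∧ ¬ HasM1 n H ∧ H.card = m}
      (nabla n + n * (n - 3) / 2) := by
  have : NeZero n := ⟨by omega⟩
  have hcount := two_mul_nabla_add_eq_two_mul_choose hn
  rw [← Arc.sum_min_length_sub 2] at hcount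
  have hupper {H : Finset (Finset (ZMod n))} (hH : IsCgh n H) (hM : ¬ HasM1 n H) :
      H.card ≤ nabla n + n * (n - 3) / 2 := by
    have := two_mul_card_add_sum_le hH hM
    omega
  have hlower := two_mul_choose_le_card_extremalCgh (n := n)
  refine ⟨⟨extremalCgh n, isCgh_extremalCgh, not_hasM1_extremalCgh, ?_⟩, ?_⟩
  · exact (hupper isCgh_extremalCgh not_hasM1_extremalCgh).antisymm (by omega)
  · rintro m ⟨H, hH, hM, rfl⟩
    exact hupper hH hM
end

section
/- For every integer n ≥ 7, the maximum number of triples in an M_2-free cgh on Ω_n equals C(n,2) − 2; that is, ex_circ(n, M_2) = n(n−1)/2 − 2. -/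
/-- `H` contains a copy of the configuration `M₂`: two vertex-disjoint triples
whose six vertices occur in clockwise cyclic order `a₁, a₂, b₁, a₃, b₂, b₃`. -/
def HasM2 (n : ℕ) (H : Finset (Finset (ZMod n))) : Prop :=
  ∃ a₁ a₂ a₃ b₁ b₂ b₃ : ZMod n,
    CWList n [a₁, a₂, b₁, a₃, b₂, b₃] ∧
    ({a₁, a₂, a₃} : Finset (ZMod n)) ∈ H ∧ ({b₁, b₂, b₃} : Finset (ZMod n)) ∈ H

/-!
An `M₂`-free cgh on `n + 1 ≥ 8` points has a side whose contraction yields an `M₂`-free cgh on `n`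
points with at most `n` fewer triples, so the bound follows by induction from `n = 7`. The
contraction of a side loses the triples through this side and identifies the triples `{i, p, q}`
and `{i + 1, p, q}`. The pairs `{p, q}` of the second kind pairwise intersect, so if there are at
least four of them, they form a star; the leaves of this star restrict the triples through one of
the sides at its center, so that a side contained in the fewest triples can be contracted. If there
are at most three of them, it is enough that the sides `0, 1` and `2, 3` do not both lie in almost
all possible triples.

For `n = 7`, some seven triples can be arranged in a cycle in which any two neighbors form `M₂`, so
at most three of them belong to the cgh. Averaging over the rotations bounds the number of
non-consecutive triples.

Triples are lifted to the universal cover `ℤ` of the cyclic order, where the cyclic order of six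
points becomes a chain of inequalities.

All triples through one point, together with the consecutive triples avoiding it, attain the bound.
-/

namespace Cgh

open Finset
open scoped Pointwise

section M2Pair

variable {n : ℕ}

/-- The ordered pair of triples `e`, `f` is placed as the triangles `a₁a₂a₃` and `b₁b₂b₃` of the
configuration `M₂`. -/
def IsM2Pair (e f : Finset (ZMod n)) : Prop :=
  ∃ a₁ a₂ a₃ b₁ b₂ b₃ : ZMod n,
    CWList n [a₁, a₂, b₁, a₃, b₂, b₃] ∧ {a₁, a₂, a₃} = e ∧ {b₁, b₂, b₃} = f

lemma hasM2_iff_exists_isM2Pair {H : Finset (Finset (ZMod n))} :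
    HasM2 n H ↔ ∃ e ∈ H, ∃ f ∈ H, IsM2Pair e f := by
  constructor
  · rintro ⟨a₁, a₂, a₃, b₁, b₂, b₃, hcw, he, hf⟩
    exact ⟨_, he, _, hf, a₁, a₂, a₃, b₁, b₂, b₃, hcw, rfl, rfl⟩
  · rintro ⟨_, he, _, hf, a₁, a₂, a₃, b₁, b₂, b₃, hcw, rfl, rfl⟩
    exact ⟨a₁, a₂, a₃, b₁, b₂, b₃, hcw, he, hf⟩

lemma cwList_six_iff {a b c d e f : ZMod n} :
    CWList n [a, b, c, d, e, f] ↔ 0 < (b - a).val ∧ (b - a).val < (c - a).val ∧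
      (c - a).val < (d - a).val ∧ (d - a).val < (e - a).val ∧ (e - a).val < (f - a).val := by
  change List.IsChain _ _ ↔ _
  simp [-ZMod.val_pos]

lemma IsM2Pair.vadd {e f : Finset (ZMod n)} (h : IsM2Pair e f) (j : ZMod n) :
    IsM2Pair (j +ᵥ e) (j +ᵥ f) := by
  obtain ⟨a₁, a₂, a₃, b₁, b₂, b₃, hcw, rfl, rfl⟩ := h
  refine ⟨j + a₁, j + a₂, j + a₃, j + b₁, j + b₂, j + b₃, ?_, ?_, ?_⟩
  · simpa only [cwList_six_iff, add_sub_add_left_eq_sub] using hcw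
  · simp only [vadd_finset_insert, vadd_finset_singleton, vadd_eq_add]
  · simp only [vadd_finset_insert, vadd_finset_singleton, vadd_eq_add]

lemma val_add_one_eq_ite (hn : 2 ≤ n) (x : ZMod n) :
    (x + 1).val = if x.val + 1 < n then x.val + 1 else 0 := by
  have : Fact (1 < n) := ⟨hn⟩
  have : NeZero n := ⟨by lia⟩
  have hx := ZMod.val_lt x
  rw [ZMod.val_add, ZMod.val_one]
  split_ifs with h
  · exact Nat.mod_eq_of_lt h
  · rw [show x.val + 1 = n by lia, Nat.mod_self]

lemma val_sub_eq_ite [NeZero n] (a b : ZMod n) :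
    (b - a).val = if a.val ≤ b.val then b.val - a.val else n + b.val - a.val := by
  split_ifs with h
  · exact ZMod.val_sub h
  · have hab : (a - b).val = a.val - b.val := ZMod.val_sub (by lia)
    have : NeZero (a - b) := ⟨fun h0 ↦ by rw [h0, ZMod.val_zero] at hab; lia⟩
    have := ZMod.val_lt a
    rw [← neg_sub a b, ZMod.val_neg_of_ne_zero, hab]
    lia

end M2Pair

section Lift

/-- The abstract form of an `M₂`-free cgh lifted to `ℤ`, the universal cover of the `n`-cycle:
`R a b c` says that the points `a < b < c < a + n` project to a triple of the cgh. -/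
structure IsM2FreeLift (n : ℕ) (R : ℤ → ℤ → ℤ → Prop) : Prop where
  rotate_iff {a b c : ℤ} : R b c (a + n) ↔ R a b c
  aababb {p q r s t u : ℤ} : p < q → q < r → r < s → s < t → t < u → u < p + n →
    R p q s → R r t u → False

/-- The projections of the integers `a`, `b`, `c` form a triple of `H`. -/
def liftTriples {n : ℕ} (H : Finset (Finset (ZMod n))) (a b c : ℤ) : Prop :=
  ({(a : ZMod n), (b : ZMod n), (c : ZMod n)} : Finset (ZMod n)) ∈ H

lemma isM2FreeLift_liftTriples {n : ℕ} [NeZero n] {H : Finset (Finset (ZMod n))}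
    (hM : ¬ HasM2 n H) : IsM2FreeLift n (liftTriples H) where
  rotate_iff {a b c} := by
    have : ({(b : ZMod n), (c : ZMod n), (a : ZMod n)} : Finset (ZMod n)) =
        {(a : ZMod n), (b : ZMod n), (c : ZMod n)} := by
      rw [pair_comm (c : ZMod n), insert_comm]
    simp [liftTriples, this]
  aababb {p q r s t u} hpq hqr hrs hst htu hup hA hB := by
    have val_sub : ∀ x : ℤ, p ≤ x → x < p + n → (((x : ZMod n) - p).val : ℤ) = x - p := by
      intro x hpx hxp
      rw [← Int.cast_sub, ZMod.val_intCast, Int.emod_eq_of_lt (by lia) (by lia)]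
    refine hM ⟨p, q, s, r, t, u, cwList_six_iff.2 ?_, hA, hB⟩
    zify
    simp only [hpq, hqr, hrs, hst, htu, sub_pos, sub_lt_sub_iff_right, and_self,
      val_sub q (by lia) (by lia), val_sub r (by lia) (by lia), val_sub s (by lia) (by lia),
      val_sub t (by lia) (by lia), val_sub u (by lia) (by lia)]

namespace IsM2FreeLift

variable {n : ℕ} {R : ℤ → ℤ → ℤ → Prop} {a b c p q r s t u : ℤ}

lemma sub_iff (h : IsM2FreeLift n R) : R (c - n) a b ↔ R a b c := by
  rw [← h.rotate_iff, sub_add_cancel]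

lemma add_add_iff (h : IsM2FreeLift n R) : R c (a + n) (b + n) ↔ R a b c := by
  rw [h.rotate_iff, h.rotate_iff]

lemma reflect (h : IsM2FreeLift n R) : IsM2FreeLift n fun a b c ↦ R (-c) (-b) (-a) where
  rotate_iff {a b c} := by rw [← h.rotate_iff, neg_add_rev, neg_add_cancel_comm]
  aababb hpq hqr hrs hst htu hup hA hB := h.aababb (neg_lt_neg htu) (neg_lt_neg hst)
    (neg_lt_neg hrs) (neg_lt_neg hqr) (neg_lt_neg hpq) (by lia) hB hA

/-! The cyclic rotations of the pattern `aababb`. In each of the following names the `k`-th letter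
tells which of the two triples contains the `k`-th of the points `p < q < r < s < t < u`. -/

lemma abaabb (h : IsM2FreeLift n R) (hpq : p < q) (hqr : q < r) (hrs : r < s) (hst : s < t)
    (htu : t < u) (hup : u < p + n) (hA : R p r s) (hB : R q t u) : False :=
  h.aababb (by lia) (by lia) hpq hqr hrs (by lia) (h.sub_iff.2 (h.sub_iff.2 hB)) hA

lemma abbaba (h : IsM2FreeLift n R) (hpq : p < q) (hqr : q < r) (hrs : r < s) (hst : s < t)
    (htu : t < u) (hup : u < p + n) (hA : R p s u) (hB : R q r t) : False :=
  h.aababb hqr hrs hst htu hup (by lia) hB (h.rotate_iff.2 hA)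

lemma ababba (h : IsM2FreeLift n R) (hpq : p < q) (hqr : q < r) (hrs : r < s) (hst : s < t)
    (htu : t < u) (hup : u < p + n) (hA : R p r u) (hB : R q s t) : False :=
  h.aababb (by lia) hpq hqr hrs hst (by lia) (h.sub_iff.2 hA) hB

lemma abbaab (h : IsM2FreeLift n R) (hpq : p < q) (hqr : q < r) (hrs : r < s) (hst : s < t)
    (htu : t < u) (hup : u < p + n) (hA : R p s t) (hB : R q r u) : False :=
  h.aababb (by lia) (by lia) (by lia) hpq hqr (by lia) (h.sub_iff.2 (h.sub_iff.2 hA))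
    (h.sub_iff.2 hB)

lemma aabbab (h : IsM2FreeLift n R) (hpq : p < q) (hqr : q < r) (hrs : r < s) (hst : s < t)
    (htu : t < u) (hup : u < p + n) (hA : R p q t) (hB : R r s u) : False :=
  h.aababb hrs hst htu hup (by lia) (by lia) hB (h.add_add_iff.2 hA)

end IsM2FreeLift

end Lift

section StarOfPairs

lemma exists_common_of_pairwise_inter {α : Type*} [LinearOrder α] {S : Finset (α × α)}
    (hlt : ∀ p ∈ S, p.1 < p.2)
    (hinter : ∀ p ∈ S, ∀ q ∈ S, p.1 = q.1 ∨ p.1 = q.2 ∨ p.2 = q.1 ∨ p.2 = q.2)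
    (hcard : 4 ≤ #S) : ∃ c, ∀ p ∈ S, p.1 = c ∨ p.2 = c := by
  by_contra! hno
  obtain ⟨p, hp⟩ : S.Nonempty := card_pos.1 (by lia)
  obtain ⟨q, hq, hq1, hq2⟩ := hno p.1
  obtain ⟨r, hr, hr1, hr2⟩ := hno p.2
  -- `p`, `q`, `r` are the three sides of a triangle, which no fourth pair can meet.
  have hsub : S ⊆ {p, q, r} := by
    intro s hs
    have := hinter s hs p hp
    have := hinter s hs q hq
    have := hinter s hs r hr
    have := hinter p hp q hq
    have := hinter p hp r hr
    have := hinter q hq r hr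
    have := hlt s hs
    have := hlt p hp
    have := hlt q hq
    have := hlt r hr
    simp only [mem_insert, mem_singleton, Prod.ext_iff]
    grind
  have := (card_le_card hsub).trans card_le_three
  lia

lemma card_add_card_le_of_forall_le {s t : Finset ℤ} {a b : ℤ} (hs : s ⊆ Icc a b)
    (ht : t ⊆ Ico a b) (hst : ∀ x ∈ s, ∀ y ∈ t, x ≤ y) : #s + #t ≤ (b + 1 - a).toNat := by
  have hdisj : Disjoint s (t.image (· + 1)) := by
    simp only [disjoint_right, mem_image, forall_exists_index, and_imp]
    rintro _ y hy rfl hy'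
    exact (lt_add_one y).not_ge (hst _ hy' _ hy)
  have hsub : s ∪ t.image (· + 1) ⊆ Icc a b := by
    refine union_subset hs (image_subset_iff.2 fun y hy ↦ ?_)
    have := mem_Ico.1 (ht hy)
    exact mem_Icc.2 (by lia)
  calc #s + #t = #(s ∪ t.image (· + 1)) := by
        rw [card_union_of_disjoint hdisj, card_image_of_injective _ (add_left_injective 1)]
    _ ≤ #(Icc a b) := card_le_card hsub
    _ = (b + 1 - a).toNat := Int.card_Icc a b

end StarOfPairs

section LightSide

variable {n : ℕ} {R : ℤ → ℤ → ℤ → Prop} {i c j : ℤ} {L : Finset ℤ}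

open scoped Classical in
/-- The apexes of the lifted triples containing `i` and `i + 1`: these are the triples that
degenerate when the side `i, i + 1` is contracted. -/
noncomputable def apexes (n : ℕ) (R : ℤ → ℤ → ℤ → Prop) (i : ℤ) : Finset ℤ :=
  {y ∈ Ioo (i + 1) (i + n) | R i (i + 1) y}

open scoped Classical in
/-- The pairs completed to a lifted triple both by `i` and by `i + 1`: the two triples are
identified when the side `i, i + 1` is contracted. -/
noncomputable def twinPairs (n : ℕ) (R : ℤ → ℤ → ℤ → Prop) (i : ℤ) : Finset (ℤ × ℤ) :=
  {p ∈ Ioo (i + 1) (i + n) ×ˢ Ioo (i + 1) (i + n) | p.1 < p.2 ∧ R i p.1 p.2 ∧ R (i + 1) p.1 p.2}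

/-- The pair `c, l` is completed to a lifted triple both by `j` and by `j + 1`, where `l` is
represented in the window `(c, c + n)`. -/
def IsLeaf (n : ℕ) (R : ℤ → ℤ → ℤ → Prop) (c j l : ℤ) : Prop :=
  (c < l ∧ l < j ∧ R c l j ∧ R c l (j + 1)) ∨
    (j + 1 < l ∧ l < c + n ∧ R c j l ∧ R c (j + 1) l)

lemma mem_apexes {y : ℤ} : y ∈ apexes n R i ↔ (i + 1 < y ∧ y < i + n) ∧ R i (i + 1) y := by
  simp only [apexes, mem_filter, mem_Ioo]

lemma apexes_subset : apexes n R i ⊆ Ioo (i + 1) (i + n) := by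
  classical exact filter_subset _ _

lemma mem_twinPairs {p : ℤ × ℤ} : p ∈ twinPairs n R i ↔
    i + 1 < p.1 ∧ p.1 < p.2 ∧ p.2 < i + n ∧ R i p.1 p.2 ∧ R (i + 1) p.1 p.2 := by
  simp only [twinPairs, mem_filter, mem_product, mem_Ioo]
  constructor
  · rintro ⟨⟨⟨h1, -⟩, -, h2⟩, h, h'⟩
    exact ⟨h1, h, h2, h'⟩
  · rintro ⟨h1, h, h2, h'⟩
    exact ⟨⟨⟨h1, h.trans h2⟩, h1.trans h, h2⟩, h, h'⟩

lemma IsM2FreeLift.twinPairs_inter (h : IsM2FreeLift n R) {p q : ℤ × ℤ}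
    (hp : p ∈ twinPairs n R i) (hq : q ∈ twinPairs n R i) :
    p.1 = q.1 ∨ p.1 = q.2 ∨ p.2 = q.1 ∨ p.2 = q.2 := by
  wlog hpq : p.1 ≤ q.1 generalizing p q
  · have := this hq hp (by lia)
    lia
  obtain ⟨hip, hp, hpi, hRp, hRp'⟩ := mem_twinPairs.1 hp
  obtain ⟨-, hq, hqi, hRq, hRq'⟩ := mem_twinPairs.1 hq
  by_contra! hne
  obtain hsep | hmeet := hne.2.2.1.lt_or_gt
  · exact h.abaabb (lt_add_one i) hip hp hsep hq hqi hRp hRq'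
  obtain hcross | hnest := hne.2.2.2.lt_or_gt
  · exact h.abbaba (lt_add_one i) hip (by lia) hmeet hcross hqi hRq hRp'
  · exact h.ababba (lt_add_one i) hip (by lia) hq hnest hpi hRp hRq'

lemma IsM2FreeLift.exists_leaves (h : IsM2FreeLift n R) (hcard : 4 ≤ #(twinPairs n R i)) :
    ∃ (c : ℤ) (L : Finset ℤ), c < i + n ∧ i + 1 < c ∧ #L = #(twinPairs n R i) ∧
      ∀ l ∈ L, IsLeaf n R c (i + n) l := by
  obtain ⟨c, hc⟩ := exists_common_of_pairwise_inter (fun p hp ↦ (mem_twinPairs.1 hp).2.1)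
    (fun p hp q hq ↦ h.twinPairs_inter hp hq) hcard
  let leaf (p : ℤ × ℤ) : ℤ := if p.1 = c then p.2 else p.1 + n
  have leaf_injOn : Set.InjOn leaf (twinPairs n R i) := by
    intro p hp q hq hpq
    have := hc p hp
    have := hc q hq
    have := mem_twinPairs.1 hp
    have := mem_twinPairs.1 hq
    simp only [leaf] at hpq
    ext <;> split_ifs at hpq <;> lia
  obtain ⟨p, hp⟩ : (twinPairs n R i).Nonempty := card_pos.1 (by lia)
  have := hc p hp
  have := mem_twinPairs.1 hp
  refine ⟨c, (twinPairs n R i).image leaf, by lia, by lia, card_image_of_injOn leaf_injOn,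
    forall_mem_image.2 fun q hq ↦ ?_⟩
  obtain ⟨hiq, hq12, hqi, hR, hR'⟩ := mem_twinPairs.1 hq
  simp only [leaf]
  split_ifs with hq1
  · subst hq1
    exact .inl ⟨hq12, hqi, h.rotate_iff.2 hR, by rwa [add_right_comm, h.rotate_iff]⟩
  · obtain rfl : q.2 = c := (hc q hq).resolve_left hq1
    refine .inr ⟨by lia, by lia, h.add_add_iff.2 hR, ?_⟩
    rwa [add_right_comm, h.add_add_iff]

lemma IsM2FreeLift.apex_le_or_eq (h : IsM2FreeLift n R) (hcj : c + 2 < j)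
    (hL : 4 ≤ #L) (hleaf : ∀ l ∈ L, IsLeaf n R c j l) {y : ℤ} (hy : y ∈ apexes n R (c + 1)) :
    y ≤ j ∨ y = c + n := by
  obtain ⟨⟨hcy, hyc⟩, hRy⟩ := mem_apexes.1 hy
  by_contra! hne
  obtain ⟨l, hlL, hl⟩ : ∃ l ∈ L, l ∉ ({c + 1, c + 2, y} : Finset ℤ) :=
    exists_mem_notMem_of_card_lt_card (card_le_three.trans_lt hL)
  simp only [mem_insert, mem_singleton, not_or] at hl
  rw [show c + 1 + 1 = c + 2 by ring] at hRy
  rcases hleaf l hlL with ⟨hcl, hlj, hR, -⟩ | ⟨hjl, hlc, hR, -⟩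
  · exact h.abbaab (q := c + 1) (r := c + 2) (by lia) (by lia) (by lia) hlj (by lia) (by lia)
      hR hRy
  obtain hly | hyl := lt_or_gt_of_ne hl.2.2
  · exact h.abbaab (q := c + 1) (r := c + 2) (by lia) (by lia) hcj (by lia) hly (by lia) hR hRy
  · exact h.abbaba (q := c + 1) (r := c + 2) (by lia) (by lia) hcj (by lia) hyl (by lia) hR hRy

lemma IsM2FreeLift.apex_le_leaf (h : IsM2FreeLift n R) (hjc : j + 1 < c + n) {y l : ℤ}
    (hl : IsLeaf n R c j l) (hcl : c + 2 < l) (hlj : l < j) (hy : y ∈ apexes n R (c + 1))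
    (hyj : y ≤ j) : y ≤ l := by
  obtain ⟨⟨hcy, hyc⟩, hRy⟩ := mem_apexes.1 hy
  rw [show c + 1 + 1 = c + 2 by ring] at hRy
  rcases hl with ⟨-, -, -, hR⟩ | hl
  · by_contra! hly
    exact h.abbaba (q := c + 1) (r := c + 2) (by lia) (by lia) hcl hly (by lia) (by lia) hR hRy
  · lia

lemma IsM2FreeLift.card_apexes_add_card_leaves_le (h : IsM2FreeLift n R) (hcj : c + 2 < j)
    (hjc : j + 1 < c + n) (hL : 4 ≤ #L) (hleaf : ∀ l ∈ L, IsLeaf n R c j l) :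
    #(apexes n R (c + 1)) + #L ≤ n - 1 := by
  let near : Finset ℤ := {y ∈ apexes n R (c + 1) | y ≤ j}
  let inner : Finset ℤ := {l ∈ L | c + 2 < l ∧ l < j}
  have h_apexes : apexes n R (c + 1) ⊆ insert (c + n : ℤ) near := by
    intro y hy
    rcases h.apex_le_or_eq hcj hL hleaf hy with hyj | rfl
    · exact mem_insert_of_mem (mem_filter.2 ⟨hy, hyj⟩)
    · exact mem_insert_self _ _
  have h_leaves : L ⊆ inner ∪ ({c + 1, c + 2} ∪ Ioo (j + 1) (c + n)) := by
    intro l hl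
    have := hleaf l hl
    simp only [IsLeaf] at this
    simp only [inner, mem_union, mem_filter, mem_insert, mem_singleton, mem_Ioo, hl, true_and]
    lia
  have h_near_inner : #near + #inner ≤ (j + 1 - (c + 3)).toNat := by
    refine card_add_card_le_of_forall_le (fun y hy ↦ ?_) (fun l hl ↦ ?_) fun y hy l hl ↦ ?_
    · obtain ⟨hy, hyj⟩ := mem_filter.1 hy
      have := (mem_apexes.1 hy).1
      exact mem_Icc.2 (by lia)
    · have := (mem_filter.1 hl).2
      exact mem_Ico.2 (by lia)
    · obtain ⟨hy, hyj⟩ := mem_filter.1 hy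
      obtain ⟨hl, hcl, hlj⟩ := mem_filter.1 hl
      exact h.apex_le_leaf hjc (hleaf l hl) hcl hlj hy hyj
  have := (card_le_card h_apexes).trans (card_insert_le _ _)
  have := (card_le_card h_leaves).trans (card_union_le _ _)
  have := card_union_le ({c + 1, c + 2} : Finset ℤ) (Ioo (j + 1) (c + n))
  have := card_le_two (a := c + 1) (b := c + 2)
  have := Int.card_Ioo (j + 1) (c + n)
  lia

lemma IsLeaf.reflect (h : IsM2FreeLift n R) {l : ℤ} (hl : IsLeaf n R c j l) :
    IsLeaf n (fun a b c ↦ R (-c) (-b) (-a)) (-c - n) (-j - 1) (-l) := by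
  have hc : -(-c - n) = c + n := by ring
  have hj : -(-j - 1) = j + 1 := by ring
  have hj' : -(-j - 1 + 1) = j := by ring
  simp only [IsLeaf, hc, hj, hj', neg_neg, h.rotate_iff]
  rcases hl with ⟨hcl, hlj, hR, hR'⟩ | ⟨hjl, hlc, hR, hR'⟩
  · exact .inr ⟨by lia, by lia, hR', hR⟩
  · exact .inl ⟨by lia, by lia, hR', hR⟩

lemma IsM2FreeLift.card_apexes_reflect (h : IsM2FreeLift n R) :
    #(apexes n (fun a b c ↦ R (-c) (-b) (-a)) i) = #(apexes n R (-i - 1)) := by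
  have hR {y : ℤ} : R (-i - 1) (-i - 1 + 1) (n - y) ↔ R (-y) (-(i + 1)) (-i) := by
    rw [← h.sub_iff (c := n - y)]
    ring_nf
  refine card_nbij' (n - ·) (n - ·) (fun y hy ↦ ?_) (fun y hy ↦ ?_)
    (fun y _ ↦ sub_sub_cancel _ y) (fun y _ ↦ sub_sub_cancel _ y)
  · obtain ⟨hy, hRy⟩ := mem_apexes.1 hy
    exact mem_apexes.2 ⟨by lia, hR.2 hRy⟩
  · obtain ⟨hy, hRy⟩ := mem_apexes.1 hy
    refine mem_apexes.2 ⟨by lia, hR.1 ?_⟩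
    rwa [sub_sub_cancel]

lemma IsM2FreeLift.exists_card_apexes_add_card_leaves_le (h : IsM2FreeLift n R) (hn : 6 ≤ n)
    (hcj : c < j) (hjc : j + 1 < c + n) (hL : 4 ≤ #L) (hleaf : ∀ l ∈ L, IsLeaf n R c j l) :
    ∃ k, #(apexes n R k) + #L ≤ n - 1 := by
  by_cases hcj' : c + 2 < j
  · exact ⟨c + 1, h.card_apexes_add_card_leaves_le hcj' hjc hL hleaf⟩
  have hcard : #(L.image (- ·)) = #L := card_image_of_injective L neg_injective
  refine ⟨-(-c - n + 1) - 1, ?_⟩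
  rw [← h.card_apexes_reflect, ← hcard]
  refine h.reflect.card_apexes_add_card_leaves_le (j := -j - 1) (by lia) (by lia) (hcard ▸ hL)
    (forall_mem_image.2 fun l hl ↦ (hleaf l hl).reflect h)

lemma apex_or_apex_of_lt_card_apexes {x y : ℤ} (hcard : n < #(apexes n R i) + 4)
    (hix : i + 1 < x) (hxy : x < y) (hyi : y < i + n) : R i (i + 1) x ∨ R i (i + 1) y := by
  by_contra! hno
  have hsub : {x, y} ⊆ Ioo (i + 1) (i + n) \ apexes n R i := by
    intro z hz
    obtain rfl | rfl := mem_insert.1 hz |>.imp_right mem_singleton.1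
    all_goals simp only [mem_sdiff, mem_Ioo, mem_apexes, hno, and_false, not_false_eq_true]; lia
  have hle := card_le_card hsub
  rw [card_pair hxy.ne, card_sdiff_of_subset apexes_subset, Int.card_Ioo] at hle
  lia

lemma IsM2FreeLift.exists_card_apexes_add_four_le (h : IsM2FreeLift n R) (hn : 8 ≤ n) :
    ∃ i, #(apexes n R i) + 4 ≤ n := by
  by_contra! hmany
  obtain ⟨x, hx3, hx6, hx⟩ : ∃ x, 3 < x ∧ x < 6 ∧ R 0 (0 + 1) x := by
    obtain hR | hR := apex_or_apex_of_lt_card_apexes (hmany 0) (x := 4) (y := 5) (by lia)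
      (by lia) (by lia)
    exacts [⟨_, by lia, by lia, hR⟩, ⟨_, by lia, by lia, hR⟩]
  obtain ⟨y, hy5, hy8, hy⟩ : ∃ y, 5 < y ∧ y < 8 ∧ R 2 (2 + 1) y := by
    obtain hR | hR := apex_or_apex_of_lt_card_apexes (hmany 2) (x := 6) (y := 7) (by lia)
      (by lia) (by lia)
    exacts [⟨_, by lia, by lia, hR⟩, ⟨_, by lia, by lia, hR⟩]
  exact h.aabbab (by lia) (by lia) (by lia) (by lia) (by lia) (by lia) hx hy

lemma IsM2FreeLift.exists_light_side (h : IsM2FreeLift n R) (hn : 8 ≤ n) :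
    ∃ i, #(apexes n R i) + #(twinPairs n R i) ≤ n - 1 := by
  obtain ⟨i, hmin⟩ : ∃ i, ∀ k, #(apexes n R i) ≤ #(apexes n R k) :=
    ⟨_, fun k ↦ Function.argmin_le (fun k ↦ #(apexes n R k)) k⟩
  refine ⟨i, ?_⟩
  by_cases hfour : 4 ≤ #(twinPairs n R i)
  · obtain ⟨c, L, hci, hic, hL, hleaf⟩ := h.exists_leaves hfour
    obtain ⟨k, hk⟩ := h.exists_card_apexes_add_card_leaves_le (by lia) hci (by lia)
      (hL ▸ hfour) hleaf
    have := hmin k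
    lia
  · obtain ⟨k, hk⟩ := h.exists_card_apexes_add_four_le hn
    have := hmin k
    lia

end LightSide

section Contraction

variable {m : ℕ}

/-- The points `i` and `i + 1` of the `(m + 1)`-cycle are both sent to the same point `0` of the
`m`-cycle, and the remaining points follow in clockwise order. -/
def collapse (i x : ZMod (m + 1)) : ZMod m := ((x - (i + 1)).val : ZMod m)

lemma val_sub_add_one_eq_iff {i x : ZMod (m + 1)} : (x - (i + 1)).val = m ↔ x = i := by
  have hval : (x - (i + 1)).val = (-1 : ZMod (m + 1)).val ↔ x = i := by
    rw [(ZMod.val_injective _).eq_iff, sub_eq_iff_eq_add, neg_add_cancel_comm_assoc]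
  rwa [ZMod.val_neg_one] at hval

lemma collapse_self (i : ZMod (m + 1)) : collapse i i = collapse i (i + 1) := by
  simp [collapse]

lemma val_collapse (i x : ZMod (m + 1)) :
    (collapse i x).val = if (x - (i + 1)).val = m then 0 else (x - (i + 1)).val := by
  have := ZMod.val_lt (x - (i + 1))
  rw [collapse, ZMod.val_natCast]
  split_ifs with h
  · rw [h, Nat.mod_self]
  · exact Nat.mod_eq_of_lt (by lia)

lemma collapse_injOn_compl_left (i : ZMod (m + 1)) :
    Set.InjOn (collapse i) {i}ᶜ := by
  intro x hx y hy hxy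
  have hxy' := congrArg ZMod.val hxy
  rw [val_collapse, val_collapse, if_neg (val_sub_add_one_eq_iff.not.2 hx),
    if_neg (val_sub_add_one_eq_iff.not.2 hy)] at hxy'
  exact sub_left_injective (ZMod.val_injective _ hxy')

lemma collapse_injOn_compl_right (i : ZMod (m + 1)) :
    Set.InjOn (collapse i) {i + 1}ᶜ := by
  intro x hx y hy hxy
  have hx' : (x - (i + 1)).val ≠ 0 := by rwa [ZMod.val_ne_zero, sub_ne_zero]
  have hy' : (y - (i + 1)).val ≠ 0 := by rwa [ZMod.val_ne_zero, sub_ne_zero]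
  have hxy' := congrArg ZMod.val hxy
  rw [val_collapse, val_collapse] at hxy'
  have hval : (x - (i + 1)).val = (y - (i + 1)).val := by lia
  exact sub_left_injective (ZMod.val_injective _ hval)

lemma collapse_injOn {i : ZMod (m + 1)} {e : Finset (ZMod (m + 1))}
    (he : ¬ (i ∈ e ∧ i + 1 ∈ e)) : Set.InjOn (collapse i) e := by
  by_cases hi : i ∈ e
  · exact (collapse_injOn_compl_right i).mono
      (Set.subset_compl_singleton_iff.2 fun hi' ↦ he ⟨hi, hi'⟩)
  · exact (collapse_injOn_compl_left i).mono (Set.subset_compl_singleton_iff.2 hi)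

lemma val_sub_lt_val_sub_of_collapse [NeZero m] {i a b c : ZMod (m + 1)}
    (hab : 0 < (collapse i b - collapse i a).val)
    (hbc : (collapse i b - collapse i a).val < (collapse i c - collapse i a).val) :
    (b - a).val < (c - a).val := by
  have := ZMod.val_lt (a - (i + 1))
  have := ZMod.val_lt (b - (i + 1))
  have := ZMod.val_lt (c - (i + 1))
  rw [← sub_sub_sub_cancel_right b a (i + 1), ← sub_sub_sub_cancel_right c a (i + 1),
    val_sub_eq_ite (a - (i + 1)) (b - (i + 1)), val_sub_eq_ite (a - (i + 1)) (c - (i + 1))]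
  simp only [val_sub_eq_ite (collapse i a), val_collapse] at hab hbc
  split_ifs at hab hbc ⊢ <;> lia

lemma cwList_of_collapse [NeZero m] {i a b c d e f : ZMod (m + 1)}
    (h : CWList m [collapse i a, collapse i b, collapse i c, collapse i d, collapse i e,
      collapse i f]) : CWList (m + 1) [a, b, c, d, e, f] := by
  obtain ⟨hab, hbc, hcd, hde, hef⟩ := cwList_six_iff.1 h
  have hba : b ≠ a := by
    rintro rfl
    simp at hab
  exact cwList_six_iff.2 ⟨ZMod.val_pos.2 (sub_ne_zero.2 hba),
    val_sub_lt_val_sub_of_collapse hab hbc,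
    val_sub_lt_val_sub_of_collapse (by lia) hcd, val_sub_lt_val_sub_of_collapse (by lia) hde,
    val_sub_lt_val_sub_of_collapse (by lia) hef⟩

lemma exists_eq_triple_of_image_eq {α β : Type*} [DecidableEq α] [DecidableEq β] {g : α → β}
    {e : Finset α} (hg : Set.InjOn g e) {a b c : β} (he : e.image g = {a, b, c}) :
    ∃ x y z, e = {x, y, z} ∧ g x = a ∧ g y = b ∧ g z = c := by
  obtain ⟨x, hx, rfl⟩ := mem_image.1 (he ▸ mem_insert_self a {b, c})
  obtain ⟨y, hy, rfl⟩ := mem_image.1 (he ▸ mem_insert_of_mem (mem_insert_self b {c}))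
  obtain ⟨z, hz, rfl⟩ := mem_image.1 (he ▸ mem_insert_of_mem (mem_insert_of_mem
    (mem_singleton_self c)))
  have hsub : {x, y, z} ⊆ e := by simp [insert_subset_iff, hx, hy, hz]
  refine ⟨x, y, z, (image_eq_image_iff_of_injOn hg subset_rfl hsub).1 ?_, rfl, rfl, rfl⟩
  simp [he]

lemma IsM2Pair.of_image_collapse [NeZero m] {i : ZMod (m + 1)} {e f : Finset (ZMod (m + 1))}
    (he : ¬ (i ∈ e ∧ i + 1 ∈ e)) (hf : ¬ (i ∈ f ∧ i + 1 ∈ f))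
    (h : IsM2Pair (e.image (collapse i)) (f.image (collapse i))) : IsM2Pair e f := by
  obtain ⟨a₁, a₂, a₃, b₁, b₂, b₃, hcw, ha, hb⟩ := h
  obtain ⟨x₁, x₂, x₃, rfl, rfl, rfl, rfl⟩ :=
    exists_eq_triple_of_image_eq (collapse_injOn he) ha.symm
  obtain ⟨y₁, y₂, y₃, rfl, rfl, rfl, rfl⟩ :=
    exists_eq_triple_of_image_eq (collapse_injOn hf) hb.symm
  exact ⟨x₁, x₂, x₃, y₁, y₂, y₃, cwList_of_collapse hcw, rfl, rfl⟩

/-- The triples of `H` that contain the side `i, i + 1`, which are lost when it is contracted. -/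
def sideTriples {n : ℕ} (H : Finset (Finset (ZMod n))) (i : ZMod n) : Finset (Finset (ZMod n)) :=
  {e ∈ H | i ∈ e ∧ i + 1 ∈ e}

/-- The triples of `H` through `i + 1` that remain in `H` when `i + 1` is replaced with `i`; both
copies have the same image when the side `i, i + 1` is contracted. -/
def twinTriples {n : ℕ} (H : Finset (Finset (ZMod n))) (i : ZMod n) : Finset (Finset (ZMod n)) :=
  {e ∈ H | i ∉ e ∧ i + 1 ∈ e ∧ insert i (e.erase (i + 1)) ∈ H}

/-- The cgh on the `m`-cycle obtained from `H` by contracting the side `i, i + 1` to a point and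
dropping the triples that contain this side. -/
def contract (H : Finset (Finset (ZMod (m + 1)))) (i : ZMod (m + 1)) : Finset (Finset (ZMod m)) :=
  {e ∈ H | ¬ (i ∈ e ∧ i + 1 ∈ e)}.image fun e ↦ e.image (collapse i)

variable {H : Finset (Finset (ZMod (m + 1)))} {i : ZMod (m + 1)}

lemma forall_mem_contract {P : Finset (ZMod m) → Prop} : (∀ e ∈ contract H i, P e) ↔
    ∀ e ∈ H, ¬ (i ∈ e ∧ i + 1 ∈ e) → P (e.image (collapse i)) := by
  simp only [contract, forall_mem_image, mem_filter, and_imp]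

lemma isCgh_contract (hH : IsCgh (m + 1) H) : IsCgh m (contract H i) :=
  forall_mem_contract.2 fun e he hi ↦ (card_image_of_injOn (collapse_injOn hi)).trans (hH e he)

lemma not_hasM2_contract [NeZero m] (hM : ¬ HasM2 (m + 1) H) : ¬ HasM2 m (contract H i) := by
  simp only [hasM2_iff_exists_isM2Pair, not_exists, not_and] at hM ⊢
  exact forall_mem_contract.2 fun e he hei ↦ forall_mem_contract.2 fun f hf hfi hef ↦
    hM e he f hf (hef.of_image_collapse hei hfi)

lemma image_collapse_insert_erase {e : Finset (ZMod (m + 1))} (he : i + 1 ∈ e) :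
    (insert i (e.erase (i + 1))).image (collapse i) = e.image (collapse i) := by
  rw [image_insert, collapse_self, ← image_insert, insert_erase he]

lemma eq_of_image_collapse_eq_of_left_notMem {e f : Finset (ZMod (m + 1))}
    (hef : e.image (collapse i) = f.image (collapse i)) (he : i ∉ e) (hf : i ∉ f) : e = f :=
  (image_eq_image_iff_of_injOn (s := {i}ᶜ) (by simpa using collapse_injOn_compl_left i)
    (subset_compl_singleton.2 he) (subset_compl_singleton.2 hf)).1 hef

lemma eq_of_image_collapse_eq_of_right_notMem {e f : Finset (ZMod (m + 1))}
    (hef : e.image (collapse i) = f.image (collapse i)) (he : i + 1 ∉ e) (hf : i + 1 ∉ f) :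
    e = f :=
  (image_eq_image_iff_of_injOn (s := {i + 1}ᶜ) (by simpa using collapse_injOn_compl_right i)
    (subset_compl_singleton.2 he) (subset_compl_singleton.2 hf)).1 hef

lemma mem_twinTriples_of_image_collapse_eq [NeZero m] {e f : Finset (ZMod (m + 1))} (he : e ∈ H)
    (hf : f ∈ H) (hie : i + 1 ∉ e) (hif : i ∉ f) (hif' : i + 1 ∈ f)
    (hef : e.image (collapse i) = f.image (collapse i)) : f ∈ twinTriples H i := by
  have : Fact (1 < m + 1) := ⟨Nat.lt_add_left_iff_pos.2 (NeZero.pos m)⟩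
  have he_eq : e = insert i (f.erase (i + 1)) :=
    eq_of_image_collapse_eq_of_right_notMem (hef.trans (image_collapse_insert_erase hif').symm) hie
      (by simp)
  exact mem_filter.2 ⟨hf, hif, hif', he_eq ▸ he⟩

lemma image_collapse_injOn [NeZero m] :
    Set.InjOn (fun e : Finset (ZMod (m + 1)) ↦ e.image (collapse i))
      ((H \ sideTriples H i) \ twinTriples H i : Finset _) := by
  intro e he f hf hef
  simp only [mem_coe, mem_sdiff, sideTriples, mem_filter, not_and] at he hf
  obtain ⟨⟨he, hei⟩, het⟩ := he
  obtain ⟨⟨hf, hfi⟩, hft⟩ := hf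
  have hei := hei he
  have hfi := hfi hf
  by_cases hie : i ∈ e
  · by_cases hif : i + 1 ∈ f
    · exact absurd (mem_twinTriples_of_image_collapse_eq he hf (hei hie)
        (fun hi ↦ hfi hi hif) hif hef) hft
    · exact eq_of_image_collapse_eq_of_right_notMem hef (hei hie) hif
  by_cases hif : i ∈ f
  · by_cases hie' : i + 1 ∈ e
    · exact absurd (mem_twinTriples_of_image_collapse_eq hf he (hfi hif) hie hie' hef.symm) het
    · exact eq_of_image_collapse_eq_of_right_notMem hef hie' (hfi hif)
  · exact eq_of_image_collapse_eq_of_left_notMem hef hie hif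

lemma card_le_card_contract_add [NeZero m] :
    #H ≤ #(contract H i) + #(sideTriples H i) + #(twinTriples H i) := by
  let rest := (H \ sideTriples H i) \ twinTriples H i
  have h_rest : #rest ≤ #(contract H i) := by
    rw [← card_image_of_injOn image_collapse_injOn]
    refine card_le_card (image_subset_image ?_)
    rw [filter_not]
    exact sdiff_subset
  have := le_card_sdiff (sideTriples H i) H
  have := le_card_sdiff (twinTriples H i) (H \ sideTriples H i)
  lia

end Contraction

section LiftCounts

variable {n : ℕ} {H : Finset (Finset (ZMod n))} {i : ℤ}

lemma intCast_ne_intCast {a b : ℤ} (hab : a < b) (hba : b < a + n) : (a : ZMod n) ≠ b := by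
  rw [Ne, ZMod.intCast_eq_intCast_iff_dvd_sub]
  intro hdvd
  have := Int.le_of_dvd (by lia) hdvd
  lia

lemma exists_intCast_eq_of_ne [NeZero n] {x : ZMod n} (hx : x ≠ i) :
    ∃ p : ℤ, i < p ∧ p < i + n ∧ (p : ZMod n) = x := by
  have hpos := ZMod.val_pos.2 (sub_ne_zero.2 hx)
  have hlt := ZMod.val_lt (x - (i : ZMod n))
  exact ⟨i + (x - (i : ZMod n)).val, by lia, by lia, by simp⟩

lemma exists_eq_intCast_triple [NeZero n] {e : Finset (ZMod n)} (he : #e = 3)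
    (hi : (i : ZMod n) ∈ e) : ∃ p q : ℤ, i < p ∧ p < q ∧ q < i + n ∧
      e = {(i : ZMod n), (p : ZMod n), (q : ZMod n)} := by
  obtain ⟨x, y, hxy, hpair⟩ := card_eq_two.1 (by rw [card_erase_of_mem hi, he] : #(e.erase i) = 2)
  have he_eq : e = insert (i : ZMod n) {x, y} := by rw [← hpair, insert_erase hi]
  have hx : x ≠ i := ne_of_mem_erase (hpair ▸ mem_insert_self x {y})
  have hy : y ≠ i := ne_of_mem_erase (hpair ▸ mem_insert_of_mem (mem_singleton_self y))
  obtain ⟨p, hip, hpi, rfl⟩ := exists_intCast_eq_of_ne hx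
  obtain ⟨q, hiq, hqi, rfl⟩ := exists_intCast_eq_of_ne hy
  rcases lt_trichotomy p q with hpq | rfl | hqp
  · exact ⟨p, q, hip, hpq, hqi, he_eq⟩
  · exact absurd rfl hxy
  · exact ⟨q, p, hiq, hqp, hpi, by rw [he_eq, pair_comm]⟩

lemma card_sideTriples_le [NeZero n] (hn : 2 ≤ n) (hH : IsCgh n H) :
    #(sideTriples H i) ≤ #(apexes n (liftTriples H) i) := by
  refine (card_le_card ?_).trans (card_image_le
    (f := fun y : ℤ ↦ ({(i : ZMod n), ((i + 1 : ℤ) : ZMod n), (y : ZMod n)} : Finset (ZMod n))))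
  intro e he
  obtain ⟨heH, hi, hi'⟩ := mem_filter.1 he
  obtain ⟨p, q, hip, hpq, hqi, rfl⟩ := exists_eq_intCast_triple (hH e heH) hi
  obtain rfl : p = i + 1 := by
    by_contra hp
    have hi_ne := intCast_ne_intCast (n := n) (lt_add_one i) (by lia)
    have hp_ne := intCast_ne_intCast (n := n) (a := i + 1) (b := p) (by lia) (by lia)
    have hq_ne := intCast_ne_intCast (n := n) (a := i + 1) (b := q) (by lia) (by lia)
    push_cast at hi_ne hp_ne hq_ne
    simp [hp_ne, hq_ne, hi_ne.symm] at hi'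
  exact mem_image.2 ⟨q, mem_apexes.2 ⟨⟨hpq, hqi⟩, heH⟩, rfl⟩

lemma card_twinTriples_le [NeZero n] (hH : IsCgh n H) :
    #(twinTriples H i) ≤ #(twinPairs n (liftTriples H) i) := by
  refine (card_le_card ?_).trans (card_image_le
    (f := fun p : ℤ × ℤ ↦ ({((i + 1 : ℤ) : ZMod n), (p.1 : ZMod n), (p.2 : ZMod n)} : Finset _)))
  intro e he
  obtain ⟨heH, hi, hi', hinsert⟩ := mem_filter.1 he
  rw [← Int.cast_one, ← Int.cast_add] at hi' hinsert
  obtain ⟨p, q, hip, hpq, hqi, rfl⟩ := exists_eq_intCast_triple (hH e heH) hi'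
  have hq : q ≠ i + n := by
    rintro rfl
    simp at hi
  have hp_ne := intCast_ne_intCast (n := n) hip (by lia)
  have hq_ne := intCast_ne_intCast (n := n) (hip.trans hpq) (by lia)
  rw [erase_insert (by simp only [mem_insert, mem_singleton, hp_ne, hq_ne, or_self,
    not_false_eq_true])] at hinsert
  exact mem_image.2 ⟨(p, q), mem_twinPairs.2 ⟨hip, hpq, by lia, hinsert, heH⟩, rfl⟩

lemma exists_card_le_card_contract_add {m : ℕ} (hm : 7 ≤ m) {H : Finset (Finset (ZMod (m + 1)))}
    (hH : IsCgh (m + 1) H) (hM : ¬ HasM2 (m + 1) H) : ∃ i, #H ≤ #(contract H i) + m := by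
  have : NeZero m := ⟨by lia⟩
  obtain ⟨i, hi⟩ := (isM2FreeLift_liftTriples hM).exists_light_side (by lia)
  have := card_sideTriples_le (i := i) (by lia) hH
  have := card_twinTriples_le (i := i) hH
  have := card_le_card_contract_add (H := H) (i := i)
  exact ⟨i, by lia⟩

end LiftCounts

section Heptagon

section OddCycle

variable {α : Type*} [Fintype α] {k : ℕ}

lemma card_le_of_forall_succ_notMem {I : Finset (Fin (2 * k + 1))}
    (hI : ∀ i ∈ I, i + 1 ∉ I) : #I ≤ k := by
  have hdisj : Disjoint I (I.image (· + 1)) := by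
    simpa only [disjoint_right, forall_mem_image] using hI
  have hcard := card_le_univ (I ∪ I.image (· + 1))
  rw [card_union_of_disjoint hdisj, card_image_of_injective _ (add_left_injective 1),
    Fintype.card_fin] at hcard
  lia

lemma sum_card_le_of_disjoint_succ {S : Fin (2 * k + 1) → Finset α}
    (hS : ∀ i, Disjoint (S i) (S (i + 1))) : ∑ i, #(S i) ≤ Fintype.card α * k := by
  classical
  calc ∑ i, #(S i) = ∑ i, #(univ.bipartiteAbove (fun i x ↦ x ∈ S i) i) := by
        simp [bipartiteAbove]
    _ = ∑ x, #(univ.bipartiteBelow (fun i x ↦ x ∈ S i) x) :=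
        sum_card_bipartiteAbove_eq_sum_card_bipartiteBelow _
    _ ≤ #(univ : Finset α) * k := sum_le_card_nsmul _ _ _ fun x _ ↦ by
        refine card_le_of_forall_succ_notMem fun i hi hi' ↦ ?_
        simp only [mem_bipartiteBelow, mem_univ, true_and] at hi hi'
        exact disjoint_left.1 (hS i) hi hi'

end OddCycle

section Rotation

variable {n : ℕ} [NeZero n] {H : Finset (Finset (ZMod n))} {e f : Finset (ZMod n)}

/-- The angles by which the triple `e` can be rotated into a member of `H`. -/
def rotations (H : Finset (Finset (ZMod n))) (e : Finset (ZMod n)) : Finset (ZMod n) :=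
  {j | j +ᵥ e ∈ H}

lemma mem_rotations {j : ZMod n} : j ∈ rotations H e ↔ j +ᵥ e ∈ H := by
  simp only [rotations, mem_filter, mem_univ, true_and]

lemma card_rotations_eq_of_vadd_eq (j : ZMod n) (h : j +ᵥ e = f) :
    #(rotations H f) = #(rotations H e) := by
  subst h
  refine card_nbij' (· + j) (· - j) (fun k hk ↦ ?_) (fun k hk ↦ ?_)
    (fun k _ ↦ add_sub_cancel_right k j) (fun k _ ↦ sub_add_cancel k j)
  · simpa only [mem_coe, mem_rotations, add_vadd] using hk
  · simpa only [mem_coe, mem_rotations, ← add_vadd, sub_add_cancel] using hk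

lemma card_rotations_le : #(rotations H e) ≤ n :=
  (card_le_univ _).trans (ZMod.card n).le

lemma disjoint_rotations (hM : ¬ HasM2 n H) (h : IsM2Pair e f) :
    Disjoint (rotations H e) (rotations H f) :=
  disjoint_left.2 fun j he hf ↦ hM <| hasM2_iff_exists_isM2Pair.2
    ⟨_, mem_rotations.1 he, _, mem_rotations.1 hf, h.vadd j⟩

lemma card_rotations_add_le (hM : ¬ HasM2 n H) (h : IsM2Pair e f) :
    #(rotations H e) + #(rotations H f) ≤ n := by
  rw [← card_union_of_disjoint (disjoint_rotations hM h)]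
  exact (card_le_univ _).trans (ZMod.card n).le

lemma card_le_sum_card_rotations {ι : Type*} [Fintype ι] {r : ι → Finset (ZMod n)}
    (hr : ∀ e ∈ H, ∃ k, ∃ j : ZMod n, j +ᵥ r k = e) : #H ≤ ∑ k, #(rotations H (r k)) := by
  have hsub : H ⊆ univ.biUnion fun k ↦ (rotations H (r k)).image (· +ᵥ r k) := by
    intro e he
    obtain ⟨k, j, rfl⟩ := hr e he
    exact mem_biUnion.2 ⟨k, mem_univ k, mem_image_of_mem _ (mem_rotations.2 he)⟩
  exact (card_le_card hsub).trans (card_biUnion_le.trans (sum_le_sum fun k _ ↦ card_image_le))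

end Rotation

/-- Representatives of the triples of the heptagon up to rotation. -/
def heptagonShapes : Fin 5 → Finset (ZMod 7) :=
  ![{0, 1, 2}, {0, 1, 3}, {0, 1, 4}, {0, 1, 5}, {0, 2, 4}]

/-- A cycle of seven triples of the heptagon, any two neighbors of which form `M₂`. Up to rotation,
it visits `{0, 1, 4}` once and each of `{0, 1, 3}`, `{0, 1, 5}`, `{0, 2, 4}` twice. -/
def heptagonCycle : Fin 7 → Finset (ZMod 7) :=
  ![{0, 1, 3}, {2, 4, 5}, {1, 3, 6}, {0, 4, 5}, {2, 3, 6}, {0, 1, 5}, {2, 4, 6}]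

lemma exists_vadd_heptagonShapes_eq :
    ∀ e : Finset (ZMod 7), #e = 3 → ∃ k, ∃ j : ZMod 7, j +ᵥ heptagonShapes k = e := by
  decide +kernel

lemma isM2Pair_heptagonCycle (i : Fin 7) :
    IsM2Pair (heptagonCycle i) (heptagonCycle (i + 1)) ∨
      IsM2Pair (heptagonCycle (i + 1)) (heptagonCycle i) := by
  fin_cases i
  · exact .inl ⟨0, 1, 3, 2, 4, 5, cwList_six_iff.2 (by decide), by decide, by decide⟩
  · exact .inr ⟨6, 1, 3, 2, 4, 5, cwList_six_iff.2 (by decide), by decide, by decide⟩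
  · exact .inr ⟨4, 5, 0, 6, 1, 3, cwList_six_iff.2 (by decide), by decide, by decide⟩
  · exact .inl ⟨4, 5, 0, 6, 2, 3, cwList_six_iff.2 (by decide), by decide, by decide⟩
  · exact .inl ⟨2, 3, 6, 5, 0, 1, cwList_six_iff.2 (by decide), by decide, by decide⟩
  · exact .inr ⟨2, 4, 6, 5, 0, 1, cwList_six_iff.2 (by decide), by decide, by decide⟩
  · exact .inr ⟨0, 1, 3, 2, 4, 6, cwList_six_iff.2 (by decide), by decide, by decide⟩

variable {H : Finset (Finset (ZMod 7))}

lemma sum_card_rotations_heptagonCycle_le (hM : ¬ HasM2 7 H) :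
    ∑ i, #(rotations H (heptagonCycle i)) ≤ 21 :=
  sum_card_le_of_disjoint_succ (k := 3) fun i ↦ (isM2Pair_heptagonCycle i).elim
    (disjoint_rotations hM) fun h ↦ (disjoint_rotations hM h).symm

lemma card_le_nineteen (hH : IsCgh 7 H) (hM : ¬ HasM2 7 H) : #H ≤ 19 := by
  have h_total : #H ≤ #(rotations H {0, 1, 2}) + #(rotations H {0, 1, 3}) +
      #(rotations H {0, 1, 4}) + #(rotations H {0, 1, 5}) + #(rotations H {0, 2, 4}) :=
    (card_le_sum_card_rotations fun e he ↦ exists_vadd_heptagonShapes_eq e (hH e he)).trans_eq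
      (Fin.sum_univ_five _)
  have h_cycle : #(rotations H {0, 1, 3}) + #(rotations H {2, 4, 5}) + #(rotations H {1, 3, 6}) +
      #(rotations H {0, 4, 5}) + #(rotations H {2, 3, 6}) + #(rotations H {0, 1, 5}) +
      #(rotations H {2, 4, 6}) ≤ 21 :=
    (Fin.sum_univ_seven _).symm.trans_le (sum_card_rotations_heptagonCycle_le hM)
  have h_245 : #(rotations H {2, 4, 5}) = #(rotations H {0, 1, 5}) :=
    card_rotations_eq_of_vadd_eq 4 (by decide)
  have h_136 : #(rotations H {1, 3, 6}) = #(rotations H {0, 2, 4}) :=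
    card_rotations_eq_of_vadd_eq 6 (by decide)
  have h_045 : #(rotations H {0, 4, 5}) = #(rotations H {0, 1, 3}) :=
    card_rotations_eq_of_vadd_eq 4 (by decide)
  have h_236 : #(rotations H {2, 3, 6}) = #(rotations H {0, 1, 4}) :=
    card_rotations_eq_of_vadd_eq 2 (by decide)
  have h_246 : #(rotations H {2, 4, 6}) = #(rotations H {0, 2, 4}) :=
    card_rotations_eq_of_vadd_eq 2 (by decide)
  have h_014 : #(rotations H {0, 1, 4}) ≤ 3 := by
    have h_add_le : #(rotations H {2, 3, 6}) + #(rotations H {0, 1, 4}) ≤ 7 :=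
      card_rotations_add_le hM
        ⟨2, 3, 6, 4, 0, 1, cwList_six_iff.2 (by decide), by decide, by decide⟩
    lia
  have h_012 : #(rotations H {0, 1, 2}) ≤ 7 := card_rotations_le
  lia

end Heptagon

section LowerBound

variable {n : ℕ}

/-- All triples through the point `0`. -/
def starTriples (n : ℕ) [NeZero n] : Finset (Finset (ZMod n)) :=
  (powersetCard 2 (univ.erase 0)).image (insert 0)

/-- The triples of three consecutive points that avoid the point `0`. -/
def consecutiveTriples (n : ℕ) : Finset (Finset (ZMod n)) :=
  (Ico 1 (n - 2)).image fun x : ℕ ↦ (Ico x (x + 3)).image Nat.cast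

lemma notMem_of_mem_powersetCard_erase {α : Type*} [DecidableEq α] {s e : Finset α} {a : α} {k : ℕ}
    (he : e ∈ powersetCard k (s.erase a)) : a ∉ e :=
  fun ha ↦ notMem_erase a s ((mem_powersetCard.1 he).1 ha)

lemma card_starTriples [NeZero n] : #(starTriples n) = (n - 1).choose 2 := by
  have h_inj : Set.InjOn (insert (0 : ZMod n)) (powersetCard 2 (univ.erase (0 : ZMod n))) :=
    (insert_erase_invOn.2.injOn).mono fun _ he ↦ notMem_of_mem_powersetCard_erase he
  rw [starTriples, card_image_of_injOn h_inj, card_powersetCard, card_erase_of_mem (mem_univ _),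
    card_univ, ZMod.card]

lemma zero_mem_of_mem_starTriples [NeZero n] {e : Finset (ZMod n)} (he : e ∈ starTriples n) :
    0 ∈ e := by
  obtain ⟨p, -, rfl⟩ := mem_image.1 he
  exact mem_insert_self 0 p

lemma isCgh_starTriples [NeZero n] : IsCgh n (starTriples n) :=
  forall_mem_image.2 fun _ hp ↦ by
    rw [card_insert_of_notMem (notMem_of_mem_powersetCard_erase hp), (mem_powersetCard.1 hp).2]

lemma natCast_injOn_range : Set.InjOn (Nat.cast : ℕ → ZMod n) (range n) := by
  rw [coe_range]
  exact CharP.natCast_injOn_Iio (ZMod n) n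

lemma Ico_add_three_subset_range {x : ℕ} (hx : x < n - 2) : Ico x (x + 3) ⊆ range n := by
  rw [range_eq_Ico]
  exact Ico_subset_Ico (Nat.zero_le x) (by lia)

lemma card_consecutiveTriples : #(consecutiveTriples n) = n - 3 := by
  rw [consecutiveTriples, card_image_of_injOn, Nat.card_Ico, Nat.sub_sub]
  intro x hx y hy hxy
  have h_Ico : Ico x (x + 3) = Ico y (y + 3) :=
    (image_eq_image_iff_of_injOn natCast_injOn_range
      (Ico_add_three_subset_range (mem_Ico.1 hx).2)
      (Ico_add_three_subset_range (mem_Ico.1 hy).2)).1 hxy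
  have hx_mem : x ∈ Ico y (y + 3) := h_Ico ▸ left_mem_Ico.2 (by lia)
  have hy_mem : y ∈ Ico x (x + 3) := h_Ico ▸ left_mem_Ico.2 (by lia)
  exact le_antisymm (mem_Ico.1 hy_mem).1 (mem_Ico.1 hx_mem).1

lemma isCgh_consecutiveTriples : IsCgh n (consecutiveTriples n) :=
  forall_mem_image.2 fun x hx ↦ by
    have hsub := coe_subset.2 (Ico_add_three_subset_range (mem_Ico.1 hx).2)
    rw [card_image_of_injOn (natCast_injOn_range.mono hsub), Nat.card_Ico, Nat.add_sub_cancel_left]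

lemma zero_notMem_of_mem_consecutiveTriples {e : Finset (ZMod n)}
    (he : e ∈ consecutiveTriples n) : 0 ∉ e := by
  obtain ⟨x, hx, rfl⟩ := mem_image.1 he
  obtain ⟨hx_pos, hxn⟩ := mem_Ico.1 hx
  intro h0
  have h0_mem : 0 ∈ (Ico x (x + 3) : Set ℕ) :=
    (natCast_injOn_range.mem_image_iff (coe_subset.2 (Ico_add_three_subset_range hxn))
      (mem_range.2 (by lia))).1 (by simpa using h0)
  have := mem_Ico.1 (mem_coe.1 h0_mem)
  lia

lemma exists_consecutive_of_mem_consecutiveTriples {e : Finset (ZMod n)}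
    (he : e ∈ consecutiveTriples n) : ∃ x, {x, x + 1, x + 1 + 1} ⊆ e := by
  obtain ⟨x, -, rfl⟩ := mem_image.1 he
  refine ⟨x, insert_subset_iff.2 ?_⟩
  have h (y) (hxy : y ∈ Ico x (x + 3)) := mem_image_of_mem (Nat.cast : ℕ → ZMod n) hxy
  have h0 := h x (by simp)
  have h1 := h (x + 1) (by simp)
  have h2 := h (x + 1 + 1) (by simp [add_assoc])
  push_cast at h1 h2
  simp [insert_subset_iff, h0, h1, h2]

lemma val_sub_eq_or_eq_or_eq {x a b c d : ZMod n} (hx : x ∈ ({b, c, d} : Finset (ZMod n))) :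
    (x - a).val = (b - a).val ∨ (x - a).val = (c - a).val ∨ (x - a).val = (d - a).val := by
  simp only [mem_insert, mem_singleton] at hx
  rcases hx with rfl | rfl | rfl <;> simp only [true_or, or_true]

lemma IsM2Pair.not_consecutive_subset (hn : 2 ≤ n) {e f : Finset (ZMod n)} (h : IsM2Pair e f)
    (x : ZMod n) : ¬ {x, x + 1, x + 1 + 1} ⊆ e ∧ ¬ {x, x + 1, x + 1 + 1} ⊆ f := by
  have : NeZero n := ⟨by lia⟩
  obtain ⟨a₁, a₂, a₃, b₁, b₂, b₃, hcw, rfl, rfl⟩ := h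
  have hcw := cwList_six_iff.1 hcw
  have := ZMod.val_lt (b₃ - a₁)
  have h1 := val_add_one_eq_ite hn (x - a₁)
  have h2 := val_add_one_eq_ite hn (x + 1 - a₁)
  rw [← add_sub_right_comm] at h1 h2
  have h_self : (a₁ - a₁).val = 0 := by rw [sub_self, ZMod.val_zero]
  simp only [insert_subset_iff, singleton_subset_iff]
  constructor
  all_goals
    rintro ⟨hx, hx', hx''⟩
    have hx := val_sub_eq_or_eq_or_eq (a := a₁) hx
    have hx' := val_sub_eq_or_eq_or_eq (a := a₁) hx'
    have hx'' := val_sub_eq_or_eq_or_eq (a := a₁) hx''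
    split_ifs at h1 h2 <;> lia

lemma IsM2Pair.disjoint {e f : Finset (ZMod n)} (h : IsM2Pair e f) : Disjoint e f := by
  obtain ⟨a₁, a₂, a₃, b₁, b₂, b₃, hcw, rfl, rfl⟩ := h
  have hcw := cwList_six_iff.1 hcw
  refine disjoint_left.2 fun x hxe hxf ↦ ?_
  have hxe := val_sub_eq_or_eq_or_eq (a := a₁) hxe
  have hxf := val_sub_eq_or_eq_or_eq (a := a₁) hxf
  rw [sub_self, ZMod.val_zero] at hxe
  lia

lemma isCgh_starTriples_union_consecutiveTriples [NeZero n] :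
    IsCgh n (starTriples n ∪ consecutiveTriples n) := fun e he ↦
  (mem_union.1 he).elim (isCgh_starTriples e) (isCgh_consecutiveTriples e)

lemma not_hasM2_starTriples_union_consecutiveTriples [NeZero n] (hn : 2 ≤ n) :
    ¬ HasM2 n (starTriples n ∪ consecutiveTriples n) := by
  rw [hasM2_iff_exists_isM2Pair]
  rintro ⟨e, he, f, hf, hef⟩
  have h_star {g} (hg : g ∈ starTriples n ∪ consecutiveTriples n)
      (h : ∀ x, ¬ {x, x + 1, x + 1 + 1} ⊆ g) : 0 ∈ g := by
    refine (mem_union.1 hg).elim zero_mem_of_mem_starTriples fun hg ↦ ?_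
    obtain ⟨x, hx⟩ := exists_consecutive_of_mem_consecutiveTriples hg
    exact absurd hx (h x)
  exact disjoint_left.1 hef.disjoint (h_star he fun x ↦ (hef.not_consecutive_subset hn x).1)
    (h_star hf fun x ↦ (hef.not_consecutive_subset hn x).2)

lemma card_starTriples_union_consecutiveTriples [NeZero n] (hn : 3 ≤ n) :
    #(starTriples n ∪ consecutiveTriples n) = n.choose 2 - 2 := by
  have h_disj : Disjoint (starTriples n) (consecutiveTriples n) := disjoint_left.2 fun _ hs hc ↦
    zero_notMem_of_mem_consecutiveTriples hc (zero_mem_of_mem_starTriples hs)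
  have h_choose : n.choose 2 = (n - 1) + (n - 1).choose 2 := by
    rw [Nat.choose_eq_choose_pred_add (by lia) two_pos, show 2 - 1 = 1 from rfl,
      Nat.choose_one_right]
  rw [card_union_of_disjoint h_disj, card_starTriples, card_consecutiveTriples]
  lia

end LowerBound

lemma card_le_choose_two_sub_two {n : ℕ} (hn : 7 ≤ n) {H : Finset (Finset (ZMod n))}
    (hH : IsCgh n H) (hM : ¬ HasM2 n H) : #H ≤ n.choose 2 - 2 := by
  induction n, hn using Nat.le_induction with
  | base => exact card_le_nineteen hH hM
  | succ m hm ih =>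
    have : NeZero m := ⟨by lia⟩
    obtain ⟨i, hi⟩ := exists_card_le_card_contract_add hm hH hM
    calc #H ≤ #(contract H i) + m := hi
      _ ≤ m.choose 2 - 2 + m :=
        Nat.add_le_add_right (ih (isCgh_contract hH) (not_hasM2_contract hM)) m
      _ = (m + 1).choose 2 - 2 := by
        have h_two_le : 2 ≤ m.choose 2 :=
          le_trans (by decide) (Nat.choose_le_choose 2 hm : Nat.choose 7 2 ≤ m.choose 2)
        rw [Nat.choose_succ_succ' m 1, Nat.choose_one_right]
        lia

end Cgh

theorem ex_M2 (n : ℕ) (hn : 7 ≤ n) :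
    IsGreatest {m : ℕ | ∃ H : Finset (Finset (ZMod n)),
        IsCgh n H ∧ ¬ HasM2 n H ∧ H.card = m}
      (n.choose 2 - 2) := by
  have : NeZero n := ⟨by lia⟩
  constructor
  · exact ⟨Cgh.starTriples n ∪ Cgh.consecutiveTriples n,
      Cgh.isCgh_starTriples_union_consecutiveTriples,
      Cgh.not_hasM2_starTriples_union_consecutiveTriples (by lia),
      Cgh.card_starTriples_union_consecutiveTriples (by lia)⟩
  · rintro _ ⟨H, hH, hM, rfl⟩
    exact Cgh.card_le_choose_two_sub_two hn hH hM
end
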